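/- (Inductive step) Let C = 2¹⁵. For every η₀ ∈ (0, 1/2] and every L₀ ≥ 0, statement B(η₀, C⁻¹η₀², L₀) implies statement A(η₀ − C⁻¹η₀², C³η₀⁻⁴ max{L₀, 1}, C⁻¹η₀²). -/

import Mathlib

open Real Pointwise

noncomputable section

abbrev Fvec (n : ℕ) : Type := Fin n → ZMod 2

/-- Shannon entropy (natural log) of a finitely supported distribution. -/
def ent {A : Type*} (p : A → ℝ) : ℝ := ∑ᶠ a, Real.negMulLog (p a)

/-- `p` is a (finitely supported) probability distribution. -/
def IsDist {A : Type*} (p : A → ℝ) : Prop := (∀ a, 0 ≤ p a) ∧ ∑ᶠ a, p a = 1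

/-- Pushforward of a distribution along a map: the distribution of `f(X)` for `X ∼ p`. -/
def push {A B : Type*} (f : A → B) (p : A → ℝ) : B → ℝ := fun b => ∑ᶠ a ∈ f ⁻¹' {b}, p a

/-- Joint distribution of a pair of independent random variables. -/
def prodDist {A B : Type*} (p : A → ℝ) (q : B → ℝ) : A × B → ℝ := fun z => p z.1 * q z.2

/-- Distribution of `X + Y` for independent `X ∼ p`, `Y ∼ q`. -/
def conv {A : Type*} [AddGroup A] (p q : A → ℝ) : A → ℝ := fun z => ∑ᶠ x, p x * q (z - x)

/-- The distribution of `X` conditioned on `U = b`, where `r` is the joint distribution of `(X, U)`. -/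
def fiber {A B : Type*} (r : A × B → ℝ) (b : B) : A → ℝ := fun a => r (a, b) / push Prod.snd r b

/-- Conditional entropy `H[X | U]` of a joint distribution `r` of `(X, U)`. -/
def condEnt {A B : Type*} (r : A × B → ℝ) : ℝ := ∑ᶠ b, push Prod.snd r b * ent (fiber r b)

/-- Doubling mass `s[X ; Y]` (of independent copies with distributions `p`, `q`). -/
def sDouble {A : Type*} [AddGroup A] (p q : A → ℝ) : ℝ := ent p + ent q - ent (conv p q)

/-- Conditional doubling mass `s[X | U ; Y | W] = 𝔼_{u ∼ U, w ∼ W} s[X_u ; Y_w]`,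
where `r1`, `r2` are the joint distributions of `(X, U)` and `(Y, W)`. -/
def sCond {A U W : Type*} [AddGroup A] (r1 : A × U → ℝ) (r2 : A × W → ℝ) : ℝ :=
  ∑ᶠ u, ∑ᶠ w, push Prod.snd r1 u * push Prod.snd r2 w * sDouble (fiber r1 u) (fiber r2 w)

/-- Conditional mutual information `I[A : B | S]` of a joint distribution of `(A, B, S)`. -/
def condMI {A B S : Type*} (r : A × B × S → ℝ) : ℝ :=
  ent (push (fun z => (z.1, z.2.2)) r) + ent (push (fun z => z.2) r)
    - ent r - ent (push (fun z => z.2.2) r)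

/-- Uniform distribution on a set. -/
def unifOn {A : Type*} (s : Set A) : A → ℝ := s.indicator fun _ => (Nat.card s : ℝ)⁻¹

/-- Entropic Ruzsa distance `d[X ; Y]`. -/
def dRuzsa {A : Type*} [AddGroup A] (p q : A → ℝ) : ℝ := ent (conv p q) - ent p / 2 - ent q / 2

/-- Joint distribution of `(X, X + Y)` for independent `X ∼ p`, `Y ∼ q`. -/
def jointSum {A : Type*} [AddGroup A] (p q : A → ℝ) : A × A → ℝ :=
  push (fun z : A × A => (z.1, z.1 + z.2)) (prodDist p q)

/-- Joint distribution of `(X, π_V(X))`. -/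
def selfProj {n : ℕ} (V : Submodule (ZMod 2) (Fvec n)) (p : Fvec n → ℝ) :
    Fvec n × (Fvec n ⧸ V) → ℝ := push (fun x => (x, V.mkQ x)) p

/-- Joint distribution of independent `(X₁, X₂, Y₁, Y₂)` with `X₁, X₂ ∼ p` and `Y₁, Y₂ ∼ q`. -/
def quad {A : Type*} (p q : A → ℝ) : A × A × A × A → ℝ :=
  fun z => p z.1 * p z.2.1 * q z.2.2.1 * q z.2.2.2

/-- Distribution of `X₁ + ⋯ + X_k` for independent `Xᵢ ∼ p i`. -/
def indepSum {A : Type*} [AddCommGroup A] (k : ℕ) (p : Fin k → A → ℝ) : A → ℝ :=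
  push (fun x : Fin k → A => ∑ i, x i) (fun x => ∏ i, p i (x i))

/-- Statement `A(η, L, c)` from the paper. -/
def StA (η L c : ℝ) : Prop :=
  ∀ (n : ℕ) (p q : Fvec n → ℝ), IsDist p → IsDist q →
    ent (conv p q) ≤ (1 - η) * (ent p + ent q) →
    ∃ V : Submodule (ZMod 2) (Fvec n),
      ent (unifOn (V : Set (Fvec n))) ≤ L * (ent p + ent q) ∧
      ent (push V.mkQ p) + ent (push V.mkQ q) ≤ (1 - c) * (ent p + ent q)

/-- Statement `B(η, ε, L)` from the paper. -/
def StB (η ε L : ℝ) : Prop :=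
  ∀ (n : ℕ) (p q : Fvec n → ℝ), IsDist p → IsDist q →
    ∃ V : Submodule (ZMod 2) (Fvec n),
      ent (unifOn (V : Set (Fvec n))) ≤ L * (ent p + ent q) ∧
      ent (conv (push V.mkQ p) (push V.mkQ q)) ≥
        (1 - η) * (ent (push V.mkQ p) + ent (push V.mkQ q)) - ε * (ent p + ent q)

/-!
Suppose `X`, `Y` have doubling mass at least `(η - δ) h`, where `h = H[X] + H[Y]`, but that no
subspace of the allowed size compresses `X` by `δ h`. Let `X'`, `Y'` be independent copies.
Minimising the entropy of the projections of `X + X'` and `X + Y'` plus a multiple of the dimension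
gives a quotient in which statement `B` controls the doubling of the pairs `(X + X', Y + Y')` and
`(X + Y', Y + X')`. Statement `B` also controls the doubling of the fibres of these sums, because a
subspace it produces cannot compress `X` much. Since the doubling of `(X, Y)` is nearly as large as
`B` permits, the fibring identity leaves only `O(δ h)` for the conditional mutual information of
`(X + Y, X' + Y')` and `(X + X', Y + Y')` given `X + Y + X' + Y'`, and likewise for the crossed
pair. In characteristic two the sums `X + Y`, `X + X'`, `X' + Y` add up to zero, so the entropic
Balog–Szemerédi–Gowers inequality makes the sums of fibres have small self-distance, and the
entropic polynomial Freiman–Ruzsa theorem covers them by subspaces. As the fibres carry doubling at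
least of order `η² h`, one of these subspaces compresses `X` after all.

Weights are not normalised and entropies are homogeneous in them, so that averages over fibres
become plain sums.
-/

/-! ### Weights and entropy -/

section Push

variable {Ω A B : Type*}

theorem push_nonneg {P : Ω → ℝ} (hP : 0 ≤ P) (X : Ω → A) : 0 ≤ push X P := fun _ =>
  finsum_nonneg fun ω => finsum_nonneg fun _ => hP ω

theorem push_smul (c : ℝ) (X : Ω → A) (P : Ω → ℝ) : push X (c • P) = c • push X P := by
  ext a
  simp only [push, Pi.smul_apply, smul_finsum]

theorem push_eq_of_iff {P : Ω → ℝ} {X : Ω → A} {Y : Ω → B} {a : A} {b : B}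
    (h : ∀ ω, X ω = a ↔ Y ω = b) : push X P a = push Y P b := by
  simp only [push, Set.mem_preimage, Set.mem_singleton_iff, h]

theorem push_id (P : Ω → ℝ) : push id P = P := by
  ext ω
  simp only [push, Set.preimage_id, finsum_mem_singleton]

theorem push_le_push [Finite Ω] {P : Ω → ℝ} (hP : 0 ≤ P) {X : Ω → A} {Y : Ω → B} {a : A} {b : B}
    (h : ∀ ω, X ω = a → Y ω = b) : push X P a ≤ push Y P b := by
  simp only [push, finsum_mem_def]
  exact finsum_le_finsum' (Set.toFinite _) (Set.toFinite _)
    (Set.indicator_le_indicator_of_subset h hP)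

theorem le_push [Finite Ω] {P : Ω → ℝ} (hP : 0 ≤ P) (X : Ω → A) (ω : Ω) : P ω ≤ push X P (X ω) := by
  conv_lhs => rw [← push_id P]
  exact push_le_push hP fun ω' h => congrArg X h

theorem push_comp_equiv {Ω' : Type*} (e : Ω' ≃ Ω) (P : Ω → ℝ) :
    push e (fun ω => P (e ω)) = P := by
  ext ω
  have : e ⁻¹' {ω} = {e.symm ω} := by ext; simp [Equiv.eq_symm_apply]
  rw [push, this, finsum_mem_singleton, e.apply_symm_apply]

theorem push_prodComm (P : A → ℝ) (Q : B → ℝ) :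
    push (Equiv.prodComm A B) (prodDist P Q) = prodDist Q P := by
  rw [← push_comp_equiv (Equiv.prodComm A B) (prodDist Q P)]
  simp only [prodDist, Equiv.prodComm_apply, Prod.fst_swap, Prod.snd_swap, mul_comm]
  rfl

theorem push_prodAssoc {C : Type*} (P : A → ℝ) (Q : B → ℝ) (R : C → ℝ) :
    push (Equiv.prodAssoc A B C) (prodDist (prodDist P Q) R) = prodDist P (prodDist Q R) := by
  rw [← push_comp_equiv (Equiv.prodAssoc A B C) (prodDist P (prodDist Q R))]
  simp only [prodDist, Equiv.prodAssoc_apply, ← mul_assoc]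
  rfl

end Push

section Weights

variable {Ω A B : Type*} [Fintype Ω]

/-- The total mass of a weight on a finite type. -/
def mass (P : Ω → ℝ) : ℝ := ∑ ω, P ω

theorem mass_nonneg {P : Ω → ℝ} (hP : 0 ≤ P) : 0 ≤ mass P :=
  Finset.sum_nonneg fun ω _ => hP ω

theorem mass_smul (c : ℝ) (P : Ω → ℝ) : mass (c • P) = c * mass P := by
  simp only [mass, Pi.smul_apply, smul_eq_mul, Finset.mul_sum]

theorem sum_mass {T : Type*} [Fintype T] (r : T → Ω → ℝ) :
    ∑ t, mass (r t) = mass (∑ t, r t) := by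
  simp only [mass, Finset.sum_apply]
  exact Finset.sum_comm

theorem mass_prodDist {Ω' : Type*} [Fintype Ω'] (P : Ω → ℝ) (Q : Ω' → ℝ) :
    mass (prodDist P Q) = mass P * mass Q := by
  simp only [mass, prodDist, Fintype.sum_prod_type, Finset.sum_mul_sum]

theorem prodDist_nonneg {P : A → ℝ} {Q : B → ℝ} (hP : 0 ≤ P) (hQ : 0 ≤ Q) : 0 ≤ prodDist P Q :=
  fun z => mul_nonneg (hP z.1) (hQ z.2)

namespace IsDist

theorem nonneg {P : A → ℝ} (hP : IsDist P) : 0 ≤ P := hP.1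

theorem mass_eq_one {P : Ω → ℝ} (hP : IsDist P) : mass P = 1 := by
  rw [mass, ← finsum_eq_sum_of_fintype, hP.2]

end IsDist

theorem isDist_iff {P : Ω → ℝ} : IsDist P ↔ 0 ≤ P ∧ mass P = 1 := by
  rw [IsDist, mass, finsum_eq_sum_of_fintype]; rfl

theorem eq_zero_of_mass_eq_zero {P : Ω → ℝ} (hP : 0 ≤ P) (h : mass P = 0) : P = 0 :=
  (Fintype.sum_eq_zero_iff_of_nonneg hP).1 h

theorem exists_eq_smul_isDist [Nonempty Ω] {P : Ω → ℝ} (hP : 0 ≤ P) :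
    ∃ P', IsDist P' ∧ P = mass P • P' := by
  classical
  rcases eq_or_ne (mass P) 0 with h | h
  · refine ⟨Pi.single (Classical.arbitrary Ω) 1, isDist_iff.2 ⟨?_, by simp [mass]⟩, ?_⟩
    · exact Pi.single_nonneg.2 zero_le_one
    · rw [h, zero_smul, eq_zero_of_mass_eq_zero hP h]
  · refine ⟨(mass P)⁻¹ • P, isDist_iff.2 ⟨?_, ?_⟩, (smul_inv_smul₀ h P).symm⟩
    · exact smul_nonneg (inv_nonneg.2 (mass_nonneg hP)) hP
    · rw [mass_smul, inv_mul_cancel₀ h]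

theorem sum_mul_le_sum_mul_of_pos {P : Ω → ℝ} (hP : 0 ≤ P) {F G : Ω → ℝ}
    (h : ∀ ω, 0 < P ω → F ω ≤ G ω) : ∑ ω, P ω * F ω ≤ ∑ ω, P ω * G ω := by
  refine Finset.sum_le_sum fun ω _ => ?_
  rcases (show 0 ≤ P ω from hP ω).eq_or_lt with h0 | h0
  · simp only [← h0, zero_mul, le_refl]
  · exact mul_le_mul_of_nonneg_left (h ω h0) h0.le

theorem push_apply [DecidableEq A] (X : Ω → A) (P : Ω → ℝ) (a : A) :
    push X P a = ∑ ω, if X ω = a then P ω else 0 := by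
  rw [push, finsum_mem_def, finsum_eq_sum_of_fintype]
  simp [Set.indicator]

theorem push_const (P : Ω → ℝ) (a : A) : push (fun _ => a) P a = mass P := by
  classical
  simp only [push_apply, if_true, mass]

theorem push_le_mass {P : Ω → ℝ} (hP : 0 ≤ P) (X : Ω → A) (a : A) : push X P a ≤ mass P := by
  rw [← push_const P ()]
  exact push_le_push hP fun _ _ => rfl

theorem push_snd_apply (R : Ω × A → ℝ) (a : A) : push Prod.snd R a = ∑ ω, R (ω, a) := by
  have : Prod.snd ⁻¹' {a} = Set.range fun ω : Ω => (ω, a) := by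
    ext ⟨ω, b⟩; simp [eq_comm]
  rw [push, this, finsum_mem_range fun _ _ h => congrArg Prod.fst h, finsum_eq_sum_of_fintype]

section Codomain

variable [Fintype A]

theorem sum_push_mul (X : Ω → A) (P : Ω → ℝ) (F : A → ℝ) :
    ∑ a, push X P a * F a = ∑ ω, P ω * F (X ω) := by
  classical
  simp only [push_apply, Finset.sum_mul]
  rw [Finset.sum_comm]
  simp only [ite_mul, zero_mul, Finset.sum_ite_eq, Finset.mem_univ, if_true]

theorem mass_push (X : Ω → A) (P : Ω → ℝ) : mass (push X P) = mass P := by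
  simpa only [mul_one, mass] using sum_push_mul X P fun _ => 1

end Codomain

end Weights

section FiniteType

variable {Ω Ω' A B : Type*} [Finite Ω]

theorem push_push [Finite A] (g : A → B) (X : Ω → A) (P : Ω → ℝ) :
    push g (push X P) = push (fun ω => g (X ω)) P := by
  classical
  have := Fintype.ofFinite Ω
  have := Fintype.ofFinite A
  ext b
  simpa only [push_apply g, push_apply (fun ω => g (X ω)), mul_ite, mul_one, mul_zero] using
    sum_push_mul X P fun a => if g a = b then 1 else 0

theorem IsDist.push [Finite A] {P : Ω → ℝ} (hP : IsDist P) (X : Ω → A) : IsDist (push X P) := by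
  have := Fintype.ofFinite Ω
  have := Fintype.ofFinite A
  exact isDist_iff.2 ⟨push_nonneg hP.nonneg X, by rw [mass_push, hP.mass_eq_one]⟩

theorem push_prodDist [Finite Ω'] (X : Ω → A) (Y : Ω' → B) (P : Ω → ℝ)
    (Q : Ω' → ℝ) : push (Prod.map X Y) (prodDist P Q) = prodDist (push X P) (push Y Q) := by
  classical
  have := Fintype.ofFinite Ω
  have := Fintype.ofFinite Ω'
  ext ⟨a, b⟩
  simp only [push_apply, prodDist, Fintype.sum_prod_type, Finset.sum_mul_sum, Prod.map,
    Prod.mk.injEq, ite_zero_mul_ite_zero]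

end FiniteType

/-- The weight on `Ω × T` whose restriction to the fibre over `t` is `r t`. -/
def joint {Ω T : Type*} (r : T → Ω → ℝ) : Ω × T → ℝ := fun z => r z.2 z.1

theorem joint_nonneg {Ω T : Type*} {r : T → Ω → ℝ} (hr : ∀ t, 0 ≤ r t) : 0 ≤ joint r :=
  fun z => hr z.2 z.1

theorem push_fst_joint {Ω T : Type*} [Fintype T] (r : T → Ω → ℝ) :
    push Prod.fst (joint r) = ∑ t, r t := by
  ext ω
  have : Prod.fst ⁻¹' {ω} = Set.range fun t : T => (ω, t) := by
    ext ⟨ω', t⟩; simp [eq_comm]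
  rw [push, this, finsum_mem_range fun _ _ h => congrArg Prod.snd h, finsum_eq_sum_of_fintype,
    Finset.sum_apply]
  rfl

/-- The entropy of the random variable `X` under the weight `P`, normalised so that it is
homogeneous of degree one in `P`. With this normalisation a conditional entropy is the sum of the
entropies of the restrictions of `P` to the conditioning events. -/
def entropy {Ω A : Type*} [Fintype Ω] (P : Ω → ℝ) (X : Ω → A) : ℝ :=
  ∑ ω, P ω * (log (mass P) - log (push X P (X ω)))

local notation "H[" p "]" => entropy p id

section Entropy

variable {Ω A B C D : Type*} [Fintype Ω] {P : Ω → ℝ}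

theorem entropy_congr {X : Ω → A} {Y : Ω → B} (h : ∀ ω ω', X ω = X ω' ↔ Y ω = Y ω') :
    entropy P X = entropy P Y := by
  simp only [entropy, push_eq_of_iff fun ω' => h ω' _]

theorem entropy_mono (hP : 0 ≤ P) {X : Ω → A} {Y : Ω → B} (h : Y.FactorsThrough X) :
    entropy P Y ≤ entropy P X :=
  sum_mul_le_sum_mul_of_pos hP fun ω hω => sub_le_sub_left
    (log_le_log (hω.trans_le (le_push hP X ω)) (push_le_push hP fun _ h' => h h')) _

theorem entropy_const (P : Ω → ℝ) (a : A) : entropy P (fun _ => a) = 0 := by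
  simp only [entropy, push_const, sub_self, mul_zero, Finset.sum_const_zero]

theorem entropy_nonneg (hP : 0 ≤ P) (X : Ω → A) : 0 ≤ entropy P X :=
  (entropy_const P ()).symm.trans_le (entropy_mono hP fun _ _ _ => rfl)

theorem entropy_le_entropy_id (hP : 0 ≤ P) (X : Ω → A) : entropy P X ≤ H[P] :=
  entropy_mono hP fun _ _ h => congrArg X h

theorem entropy_smul (hP : 0 ≤ P) {c : ℝ} (hc : 0 ≤ c) (X : Ω → A) :
    entropy (c • P) X = c * entropy P X := by
  rcases hc.eq_or_lt with rfl | hc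
  · simp only [entropy, zero_smul, Pi.zero_apply, zero_mul, Finset.sum_const_zero]
  simp only [entropy, Finset.mul_sum, mass_smul, push_smul, Pi.smul_apply, smul_eq_mul]
  refine Finset.sum_congr rfl fun ω _ => ?_
  rcases (show 0 ≤ P ω from hP ω).eq_or_lt with h0 | h0
  · simp only [← h0, mul_zero, zero_mul]
  have hX : 0 < push X P (X ω) := h0.trans_le (le_push hP X ω)
  rw [log_mul hc.ne' (hX.trans_le (push_le_mass hP X _)).ne', log_mul hc.ne' hX.ne']
  ring

theorem entropy_push [Fintype A] (X : Ω → A) (g : A → B) :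
    entropy (push X P) g = entropy P fun ω => g (X ω) := by
  simp only [entropy, mass_push, push_push, sum_push_mul]

theorem entropy_push_id [Fintype A] (X : Ω → A) : H[push X P] = entropy P X := entropy_push X id

theorem entropy_eq_sum_negMulLog [Fintype A] (X : Ω → A) :
    entropy P X = ∑ a, negMulLog (push X P a) - negMulLog (mass P) := by
  rw [← entropy_push_id]
  simp only [entropy, push_id, mass_push, id, mul_sub, Finset.sum_sub_distrib, ← Finset.sum_mul,
    negMulLog, neg_mul, Finset.sum_neg_distrib]
  rw [← mass, mass_push]
  ring

theorem entropy_prodDist {Ω' : Type*} [Fintype Ω'] {Q : Ω' → ℝ} (hP : 0 ≤ P) (hQ : 0 ≤ Q)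
    (X : Ω → A) (Y : Ω' → B) :
    entropy (prodDist P Q) (Prod.map X Y) = mass Q * entropy P X + mass P * entropy Q Y := by
  have hterm : ∀ ω ω', P ω * Q ω' * (log (mass P * mass Q) - log (push X P (X ω) * push Y Q (Y ω')))
      = Q ω' * (P ω * (log (mass P) - log (push X P (X ω))))
        + P ω * (Q ω' * (log (mass Q) - log (push Y Q (Y ω')))) := by
    intro ω ω'
    rcases (show 0 ≤ P ω from hP ω).eq_or_lt with h0 | h0
    · simp only [← h0, mul_zero, zero_mul, add_zero]
    rcases (show 0 ≤ Q ω' from hQ ω').eq_or_lt with h1 | h1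
    · simp only [← h1, mul_zero, zero_mul, add_zero]
    have hX : 0 < push X P (X ω) := h0.trans_le (le_push hP X ω)
    have hY : 0 < push Y Q (Y ω') := h1.trans_le (le_push hQ Y ω')
    rw [log_mul (hX.trans_le (push_le_mass hP X _)).ne' (hY.trans_le (push_le_mass hQ Y _)).ne',
      log_mul hX.ne' hY.ne']
    ring
  simp only [entropy, push_prodDist, mass_prodDist, Fintype.sum_prod_type]
  simp only [prodDist, Prod.map, hterm, Finset.sum_add_distrib, ← Finset.sum_mul,
    ← Finset.mul_sum]
  rfl

theorem entropy_prodDist_of_iff {Ω' : Type*} [Fintype Ω'] {Q : Ω' → ℝ} (hP : 0 ≤ P) (hQ : 0 ≤ Q)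
    {X : Ω → A} {Y : Ω' → B} {F : Ω × Ω' → C}
    (hF : ∀ z z', F z = F z' ↔ X z.1 = X z'.1 ∧ Y z.2 = Y z'.2) :
    entropy (prodDist P Q) F = mass Q * entropy P X + mass P * entropy Q Y := by
  rw [← entropy_prodDist hP hQ]
  exact entropy_congr fun z z' => (hF z z').trans Prod.mk_inj.symm

theorem sum_entropy {T : Type*} [Fintype T] (r : T → Ω → ℝ) (F : Ω × T → A) :
    ∑ t, entropy (r t) (fun ω => F (ω, t))
      = entropy (joint r) (fun z => (F z, z.2)) - entropy (joint r) Prod.snd := by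
  classical
  have hF : ∀ ω t, push (fun z : Ω × T => (F z, z.2)) (joint r) (F (ω, t), t)
      = push (fun ω => F (ω, t)) (r t) (F (ω, t)) := fun ω t => by
    simp only [push_apply, Fintype.sum_prod_type, joint, Prod.mk.injEq, and_comm (b := _ = t),
      ite_and, Finset.sum_ite_eq', Finset.mem_univ, if_true]
  have hsnd : ∀ t, push Prod.snd (joint r) t = mass (r t) := push_snd_apply (joint r)
  simp only [entropy, Fintype.sum_prod_type_right, hF, hsnd, ← Finset.sum_sub_distrib, ← mul_sub]
  simp only [joint, sub_sub_sub_cancel_left]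

end Entropy

section Submodularity

variable {Ω A B C D : Type*}

/-- Gibbs' inequality. -/
theorem sum_mul_log_sub_log_le [Fintype Ω] {P Q : Ω → ℝ} (hP : 0 ≤ P) (hQ : 0 ≤ Q)
    (hPQ : ∀ ω, 0 < P ω → 0 < Q ω) : ∑ ω, P ω * (log (Q ω) - log (P ω)) ≤ mass Q - mass P := by
  rw [mass, mass, ← Finset.sum_sub_distrib]
  refine Finset.sum_le_sum fun ω _ => ?_
  rcases (show 0 ≤ P ω from hP ω).eq_or_lt with h0 | h0
  · rw [← h0, zero_mul, sub_zero]
    exact hQ ω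
  · rw [← log_div (hPQ ω h0).ne' h0.ne']
    calc P ω * log (Q ω / P ω) ≤ P ω * (Q ω / P ω - 1) :=
          mul_le_mul_of_nonneg_left (log_le_sub_one_of_pos (div_pos (hPQ ω h0) h0)) h0.le
      _ = Q ω - P ω := by field_simp

-- Gibbs' inequality against the coupling `Q` in which `X` and `Y` are conditionally independent
-- given `Z`.
theorem entropy_triple_add_le [Fintype A] [Fintype B] [Fintype C] {P : A × B × C → ℝ}
    (hP : 0 ≤ P) :
    entropy P id + entropy P (fun w => w.2.2)
      ≤ entropy P (fun w => (w.1, w.2.2)) + entropy P Prod.snd := by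
  set R := push (fun w : A × B × C => (w.1, w.2.2)) P
  set S := push (Prod.snd : A × B × C → B × C) P
  set T := push (fun w : A × B × C => w.2.2) P
  set Q : A × B × C → ℝ := fun w => R (w.1, w.2.2) * S w.2 / T w.2.2
  have hRT : ∀ c, ∑ a, R (a, c) = T c := fun c => by
    rw [← push_snd_apply, push_push]
  have hST : ∀ c, ∑ b, S (b, c) = T c := fun c => by
    rw [← push_snd_apply, push_push]
  have hmass : mass Q ≤ mass P := by
    rw [← mass_push (fun w : A × B × C => w.2.2) P, mass, mass, Fintype.sum_prod_type]
    simp only [Q, Fintype.sum_prod_type_right (α₁ := B), ← Finset.sum_div]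
    rw [Finset.sum_comm]
    refine Finset.sum_le_sum fun c _ => ?_
    rw [← Finset.sum_div, ← Finset.sum_mul_sum, hRT, hST]
    exact (mul_self_div_self _).le
  have hpos : ∀ w, 0 < P w → 0 < R (w.1, w.2.2) ∧ 0 < S w.2 ∧ 0 < T w.2.2 := fun w hw =>
    ⟨hw.trans_le (le_push hP _ w), hw.trans_le (le_push hP _ w), hw.trans_le (le_push hP _ w)⟩
  have hQ : 0 ≤ Q := fun w =>
    div_nonneg (mul_nonneg (push_nonneg hP _ _) (push_nonneg hP _ _)) (push_nonneg hP _ _)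
  have hGibbs := sum_mul_log_sub_log_le hP hQ fun w hw =>
    div_pos (mul_pos (hpos w hw).1 (hpos w hw).2.1) (hpos w hw).2.2
  simp only [entropy, push_id, id, ← Finset.sum_add_distrib]
  rw [← sub_nonpos, ← Finset.sum_sub_distrib]
  refine le_trans (le_of_eq (Finset.sum_congr rfl fun w _ => ?_))
    (hGibbs.trans (sub_nonpos.2 hmass))
  rcases (show 0 ≤ P w from hP w).eq_or_lt with h0 | h0
  · simp only [← h0, zero_mul, add_zero, sub_zero]
  obtain ⟨hR, hS, hT⟩ := hpos w h0
  rw [log_div (mul_pos hR hS).ne' hT.ne', log_mul hR.ne' hS.ne']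
  ring

variable [Fintype Ω] {P : Ω → ℝ}

/-- Submodularity of entropy. -/
theorem entropy_add_le_add (hP : 0 ≤ P) {X : Ω → A} {Y : Ω → B} {Z : Ω → C} {W : Ω → D}
    (hX : Z.FactorsThrough X) (hY : Z.FactorsThrough Y)
    (hW : W.FactorsThrough fun ω => (X ω, Y ω)) :
    entropy P W + entropy P Z ≤ entropy P X + entropy P Y := by
  classical
  have := Set.fintypeRange X
  have := Set.fintypeRange Y
  have := Set.fintypeRange Z
  let U : Ω → Set.range X × Set.range Y × Set.range Z := fun ω =>
    (Set.rangeFactorization X ω, Set.rangeFactorization Y ω, Set.rangeFactorization Z ω)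
  have h := entropy_triple_add_le (push_nonneg hP U)
  simp only [entropy_push, U, id] at h
  refine le_trans (add_le_add (entropy_mono hP ?_) (entropy_mono hP ?_))
    (h.trans (add_le_add (entropy_mono hP ?_) (entropy_mono hP ?_))) <;> intro ω ω' h'
  all_goals simp only [Prod.mk.injEq, Set.rangeFactorization, Subtype.mk.injEq] at h' ⊢
  · exact hW (Prod.ext h'.1 h'.2.1)
  · exact h'
  · exact ⟨h', hX h'⟩
  · exact ⟨h', hY h'⟩

theorem sum_entropy_sub_le {T : Type*} [Fintype T] {r : T → Ω → ℝ} (hr : ∀ t, 0 ≤ r t)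
    {X : Ω → A} {Y : Ω → B} (h : Y.FactorsThrough X) :
    ∑ t, (entropy (r t) X - entropy (r t) Y) ≤ entropy (∑ t, r t) X - entropy (∑ t, r t) Y := by
  have hsub := entropy_add_le_add (joint_nonneg hr) (X := fun z => X z.1)
    (Y := fun z => (Y z.1, z.2)) (Z := fun z => Y z.1) (W := fun z => (X z.1, z.2))
    (fun _ _ h' => h h') (fun _ _ h' => (Prod.mk.inj h').1)
    (fun _ _ h' => Prod.ext (Prod.mk.inj h').1 (Prod.mk.inj (Prod.mk.inj h').2).2)
  rw [Finset.sum_sub_distrib, sum_entropy r fun z => X z.1, sum_entropy r fun z => Y z.1,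
    ← push_fst_joint, entropy_push, entropy_push]
  linarith

theorem sum_entropy_le {T : Type*} [Fintype T] {r : T → Ω → ℝ} (hr : ∀ t, 0 ≤ r t) (X : Ω → A) :
    ∑ t, entropy (r t) X ≤ entropy (∑ t, r t) X := by
  simpa only [entropy_const, sub_zero] using
    sum_entropy_sub_le hr (X := X) (Y := fun _ => ()) fun _ _ _ => rfl

end Submodularity

/-! ### Sums of independent variables -/

section PairEntropy

variable {Ω A : Type*} [Fintype Ω]

/-- `H[f(X)] + H[f(Y)]` for independent `X`, `Y`, made homogeneous in both weights. -/
def pairEntropy (f : Ω → A) (p q : Ω → ℝ) : ℝ := mass q * entropy p f + mass p * entropy q f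

theorem pairEntropy_comm (f : Ω → A) (p q : Ω → ℝ) : pairEntropy f p q = pairEntropy f q p :=
  add_comm _ _

theorem pairEntropy_nonneg {p q : Ω → ℝ} (hp : 0 ≤ p) (hq : 0 ≤ q)
    (f : Ω → A) : 0 ≤ pairEntropy f p q :=
  add_nonneg (mul_nonneg (mass_nonneg hq) (entropy_nonneg hp f))
    (mul_nonneg (mass_nonneg hp) (entropy_nonneg hq f))

theorem sum_pairEntropy {T : Type*} [Fintype T] (f : Ω → A) (r : T → Ω → ℝ)
    (s : Ω → ℝ) : ∑ t, pairEntropy f (r t) s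
      = mass s * ∑ t, entropy (r t) f + mass (∑ t, r t) * entropy s f := by
  simp only [pairEntropy, Finset.sum_add_distrib, ← Finset.mul_sum, ← Finset.sum_mul, sum_mass]

end PairEntropy

section Sums

variable {G A B : Type*} [AddCommGroup G]

section Finite

variable [Finite G]

theorem conv_eq_push (p q : G → ℝ) : conv p q = push (fun z => z.1 + z.2) (prodDist p q) := by
  classical
  have := Fintype.ofFinite G
  ext z
  simp only [conv, finsum_eq_sum_of_fintype, push_apply, Fintype.sum_prod_type, prodDist,
    ← eq_sub_iff_add_eq', Finset.sum_ite_eq', Finset.mem_univ, if_true]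

theorem conv_push {Ω Ω' : Type*} [Finite Ω] [Finite Ω'] (X : Ω → G) (Y : Ω' → G) (P : Ω → ℝ)
    (Q : Ω' → ℝ) :
    conv (push X P) (push Y Q) = push (fun z => X z.1 + Y z.2) (prodDist P Q) := by
  rw [conv_eq_push, ← push_prodDist, push_push]
  rfl

theorem conv_nonneg {p q : G → ℝ} (hp : 0 ≤ p) (hq : 0 ≤ q) : 0 ≤ conv p q := by
  rw [conv_eq_push]
  exact push_nonneg (prodDist_nonneg hp hq) _

theorem conv_smul_smul (c d : ℝ) (p q : G → ℝ) : conv (c • p) (d • q) = (c * d) • conv p q := by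
  have : prodDist (c • p) (d • q) = (c * d) • prodDist p q := by
    ext z
    simp only [prodDist, Pi.smul_apply, smul_eq_mul]
    ring
  rw [conv_eq_push, conv_eq_push, this, push_smul]

theorem conv_comm (p q : G → ℝ) : conv p q = conv q p := by
  rw [conv_eq_push, conv_eq_push, ← push_prodComm p q, push_push]
  simp only [Equiv.prodComm_apply, Prod.fst_swap, Prod.snd_swap, add_comm]

theorem conv_conv_eq_push (p q r : G → ℝ) :
    conv (conv p q) r = push (fun z => z.1.1 + z.1.2 + z.2) (prodDist (prodDist p q) r) := by
  rw [conv_eq_push p q, ← push_id r, conv_push, push_id]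
  rfl

theorem conv_assoc (p q r : G → ℝ) : conv (conv p q) r = conv p (conv q r) := by
  rw [conv_conv_eq_push, conv_eq_push q r, ← push_id p, conv_push, push_id,
    ← push_prodAssoc, push_push]
  simp only [Equiv.prodAssoc_apply, id, add_assoc]

theorem push_conv {F : Type*} [AddCommGroup A] [Finite A] [FunLike F G A]
    [AddMonoidHomClass F G A] (f : F) (p q : G → ℝ) :
    push f (conv p q) = conv (push f p) (push f q) := by
  rw [conv_push, conv_eq_push, push_push]
  simp only [map_add]

theorem conv_push_inl (p q r : G → ℝ) :
    conv (push (AddMonoidHom.inl G G) p) (prodDist q r) = prodDist (conv p q) r := by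
  have hright : prodDist (conv p q) r
      = push (Prod.map (fun z => z.1 + z.2) id) (prodDist (prodDist p q) r) := by
    rw [push_prodDist, push_id, conv_eq_push]
  rw [hright, ← push_id (prodDist q r), conv_push, ← push_prodAssoc, push_push]
  congr with z <;> simp

end Finite

variable [Fintype G]

theorem mass_conv (p q : G → ℝ) : mass (conv p q) = mass p * mass q := by
  rw [conv_eq_push, mass_push, mass_prodDist]

theorem entropy_conv (p q : G → ℝ) (f : G → A) :
    entropy (conv p q) f = entropy (prodDist p q) fun z => f (z.1 + z.2) := by
  rw [conv_eq_push, entropy_push]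

theorem IsDist.conv {G : Type*} [AddCommGroup G] [Finite G] {p q : G → ℝ} (hp : IsDist p)
    (hq : IsDist q) : IsDist (conv p q) := by
  have := Fintype.ofFinite G
  exact isDist_iff.2 ⟨conv_nonneg hp.nonneg hq.nonneg, by
    rw [mass_conv, hp.mass_eq_one, hq.mass_eq_one, one_mul]⟩

variable {p q r : G → ℝ}

section Projection

variable [AddCommGroup A] [AddCommGroup B] {F F' : Type*} [FunLike F G A] [AddMonoidHomClass F G A]
  [FunLike F' G B] [AddMonoidHomClass F' G B]

theorem entropy_conv_add_le_of_factorsThrough (hp : 0 ≤ p) (hq : 0 ≤ q) (f : F) (g : F')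
    (h : Function.FactorsThrough g f) :
    entropy (conv p q) g + mass p * entropy q f ≤ entropy (conv p q) f + mass p * entropy q g := by
  have hX := entropy_prodDist_of_iff hp hq (X := id) (Y := g) (F := fun z => (z.1, g z.2))
    fun _ _ => Prod.mk_inj
  have hW := entropy_prodDist_of_iff hp hq (X := id) (Y := f) (F := fun z => (z.1, f z.2))
    fun _ _ => Prod.mk_inj
  have := entropy_add_le_add (prodDist_nonneg hp hq) (X := fun z => (z.1, g z.2))
    (Y := fun z => f (z.1 + z.2)) (Z := fun z => g (z.1 + z.2)) (W := fun z => (z.1, f z.2))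
    (fun _ _ h' => by simp_all only [Prod.mk.injEq, map_add]) (fun _ _ h' => h h') fun z z' h' => by
      simp only [map_add, Prod.mk.injEq] at h' ⊢
      exact ⟨h'.1.1, add_left_cancel (h'.1.1 ▸ h'.2)⟩
  rw [entropy_conv, entropy_conv]
  linarith

theorem mass_mul_entropy_le_conv (hp : 0 ≤ p) (hq : 0 ≤ q) (f : F) :
    mass p * entropy q f ≤ entropy (conv p q) f := by
  have := entropy_conv_add_le_of_factorsThrough hp hq f (0 : G →+ Unit) fun _ _ _ => rfl
  rwa [show ⇑(0 : G →+ Unit) = fun _ => () from rfl, entropy_const, entropy_const, mul_zero,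
    zero_add, add_zero] at this

end Projection

/-- The entropic Kaimanovich–Vershik inequality. -/
theorem entropy_conv_conv_add_le (hp : 0 ≤ p) (hq : 0 ≤ q) (hr : 0 ≤ r) :
    H[conv (conv p q) r] + mass p * mass r * H[q]
      ≤ mass r * H[conv p q] + mass p * H[conv q r] := by
  have h := entropy_conv_add_le_of_factorsThrough (push_nonneg hp (AddMonoidHom.inl G G))
    (prodDist_nonneg hq hr) (AddMonoidHom.id (G × G))
    (AddMonoidHom.fst G G + AddMonoidHom.snd G G) fun _ _ h => congrArg _ h
  have hsum : entropy (prodDist (conv p q) r) (AddMonoidHom.fst G G + AddMonoidHom.snd G G)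
      = H[conv (conv p q) r] := (entropy_conv (conv p q) r id).symm
  have hsum' : entropy (prodDist q r) (AddMonoidHom.fst G G + AddMonoidHom.snd G G)
      = H[conv q r] := (entropy_conv q r id).symm
  have hpair : ∀ {a b : G → ℝ}, 0 ≤ a → 0 ≤ b → entropy (prodDist a b) (AddMonoidHom.id (G × G))
      = mass b * H[a] + mass a * H[b] := fun ha hb => entropy_prodDist ha hb id id
  rw [conv_push_inl, mass_push, hpair hq hr, hpair (conv_nonneg hp hq) hr, mass_conv, hsum,
    hsum'] at h
  linarith

section Doubling

/-- The doubling mass `s[f(X) ; f(Y)] = H[f(X)] + H[f(Y)] - H[f(X + Y)]`, for independent `X`, `Y`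
and an additive map `f`, made homogeneous in both weights. -/
def doubling (f : G → A) (p q : G → ℝ) : ℝ := pairEntropy f p q - entropy (conv p q) f

theorem doubling_comm (f : G → A) (p q : G → ℝ) : doubling f p q = doubling f q p := by
  rw [doubling, doubling, pairEntropy_comm, conv_comm]

theorem mass_mul_doubling_le (hp : 0 ≤ p) (hq : 0 ≤ q) (hr : 0 ≤ r) :
    mass r * doubling id p q ≤ doubling id p (conv q r) := by
  have h := entropy_conv_conv_add_le hp hq hr
  rw [conv_assoc] at h
  simp only [doubling, pairEntropy, mass_conv]
  linarith

variable [AddCommGroup A] {F : Type*} [FunLike F G A] [AddMonoidHomClass F G A]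

theorem doubling_le (hp : 0 ≤ p) (hq : 0 ≤ q) (f : F) : doubling f p q ≤ mass q * entropy p f := by
  have := mass_mul_entropy_le_conv hp hq f
  simp only [doubling, pairEntropy]
  linarith

theorem doubling_nonneg (hp : 0 ≤ p) (hq : 0 ≤ q) (f : F) : 0 ≤ doubling f p q := by
  rw [doubling, pairEntropy, ← entropy_prodDist hp hq, entropy_conv, sub_nonneg]
  refine entropy_mono (prodDist_nonneg hp hq) fun z z' h => ?_
  simp only [Prod.map, Prod.mk.injEq] at h
  rw [map_add, map_add, h.1, h.2]

theorem entropy_conv_le (hp : 0 ≤ p) (hq : 0 ≤ q) (f : F) :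
    entropy (conv p q) f ≤ pairEntropy f p q :=
  sub_nonneg.1 (doubling_nonneg hp hq f)

theorem doubling_id_le_add (hp : 0 ≤ p) (hq : 0 ≤ q) (f : F) :
    doubling id p q ≤ doubling f p q + mass q * (H[p] - entropy p f) := by
  have h := entropy_conv_add_le_of_factorsThrough hp hq (AddMonoidHom.id G) f
    fun _ _ h => congrArg f h
  simp only [doubling, pairEntropy, AddMonoidHom.coe_id] at h ⊢
  linarith

end Doubling

section Fibers

/-- The weight of `X` restricted to the event `X + X' = u`, for independent `X ∼ p`, `X' ∼ p'`. -/
def fiberWeight (p p' : G → ℝ) (u : G) : G → ℝ := fun x => p x * p' (u - x)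

theorem fiberWeight_nonneg {G : Type*} [AddCommGroup G] {p q : G → ℝ} (hp : 0 ≤ p) (hq : 0 ≤ q)
    (u : G) : 0 ≤ fiberWeight p q u :=
  fun x => mul_nonneg (hp x) (hq (u - x))

theorem sum_fiberWeight (p p' : G → ℝ) : ∑ u, fiberWeight p p' u = mass p' • p := by
  ext x
  simp only [fiberWeight, Finset.sum_apply, ← Finset.mul_sum, Pi.smul_apply, smul_eq_mul, mass]
  rw [mul_comm]
  exact congrArg (· * p x) (Fintype.sum_equiv (Equiv.subRight x) _ _ fun _ => rfl)

theorem sum_mass_fiberWeight (p p' : G → ℝ) :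
    ∑ u, mass (fiberWeight p p' u) = mass p * mass p' := by
  rw [sum_mass, sum_fiberWeight, mass_smul, mul_comm]

theorem joint_fiberWeight {G : Type*} [AddCommGroup G] [Finite G] (p p' : G → ℝ) :
    joint (fiberWeight p p') = push (fun z => (z.1, z.1 + z.2)) (prodDist p p') := by
  let shear : G × G ≃ G × G :=
    ⟨fun z => (z.1, z.2 - z.1), fun z => (z.1, z.1 + z.2), fun z => by simp, fun z => by simp⟩
  rw [← push_comp_equiv shear (prodDist p p'), push_push]
  simp only [shear, Equiv.coe_fn_mk, add_sub_cancel]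
  exact (push_id _).symm

theorem sum_entropy_fiberWeight (hp : 0 ≤ p) (hq : 0 ≤ q) :
    ∑ u, H[fiberWeight p q u] = doubling id p q := by
  have h := sum_entropy (fiberWeight p q) Prod.fst
  rw [joint_fiberWeight, entropy_push, entropy_push, entropy_prodDist_of_iff hp hq (X := id)
    (Y := id) fun z z' => by simp +contextual] at h
  rw [doubling, entropy_conv p q id]
  exact h

end Fibers

end Sums

/-! ### Balog–Szemerédi–Gowers and the fibring identity -/

section IndependentCopies

theorem push_joint {Ω A T : Type*} [Finite Ω] [Finite T] (r : T → Ω → ℝ) (f : Ω → A) :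
    push (fun z => (f z.1, z.2)) (joint r) = joint fun t => push f (r t) := by
  classical
  have := Fintype.ofFinite Ω
  have := Fintype.ofFinite T
  ext ⟨a, t⟩
  simp only [push_apply, joint, Fintype.sum_prod_type, Prod.mk.injEq, and_comm (b := _ = t),
    ite_and, Finset.sum_ite_eq', Finset.mem_univ, if_true]

theorem push_fst_prodDist {Ω A : Type*} [Fintype A] (P : Ω → ℝ) (Q : A → ℝ) :
    push Prod.fst (prodDist P Q) = mass Q • P := by
  have : prodDist P Q = joint fun a => Q a • P := funext fun _ => mul_comm _ _
  rw [this, push_fst_joint, ← Finset.sum_smul, mass]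

variable {Ω A T : Type*} [Fintype Ω]

/-- The joint weight of two independent variables of weight `P`, normalised to have the same mass
as `P`. -/
def indepCopies (P : Ω → ℝ) : Ω × Ω → ℝ := (mass P)⁻¹ • prodDist P P

variable {P : Ω → ℝ}

theorem indepCopies_nonneg (hP : 0 ≤ P) : 0 ≤ indepCopies P :=
  smul_nonneg (inv_nonneg.2 (mass_nonneg hP)) (prodDist_nonneg hP hP)

theorem inv_mass_smul_mass_smul (hP : 0 ≤ P) : (mass P)⁻¹ • mass P • P = P := by
  rcases eq_or_ne (mass P) 0 with h | h
  · rw [eq_zero_of_mass_eq_zero hP h, smul_zero, smul_zero]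
  · exact inv_smul_smul₀ h P

theorem push_fst_indepCopies (hP : 0 ≤ P) : push Prod.fst (indepCopies P) = P := by
  rw [indepCopies, push_smul, push_fst_prodDist, inv_mass_smul_mass_smul hP]

theorem push_swap_indepCopies (P : Ω → ℝ) :
    push (Equiv.prodComm Ω Ω) (indepCopies P) = indepCopies P := by
  rw [indepCopies, push_smul, push_prodComm]

theorem entropy_indepCopies (hP : 0 ≤ P) (X : Ω × Ω → A) :
    entropy (indepCopies P) X = (mass P)⁻¹ * entropy (prodDist P P) X :=
  entropy_smul (prodDist_nonneg hP hP) (inv_nonneg.2 (mass_nonneg hP)) X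

theorem entropy_indepCopies_id (hP : 0 ≤ P) : H[indepCopies P] = 2 * H[P] := by
  have hpair : H[prodDist P P] = mass P * H[P] + mass P * H[P] := entropy_prodDist hP hP id id
  rw [entropy_indepCopies hP, hpair, ← two_mul, mul_left_comm, ← entropy_smul hP (mass_nonneg hP),
    ← entropy_smul (smul_nonneg (mass_nonneg hP) hP) (inv_nonneg.2 (mass_nonneg hP)),
    inv_mass_smul_mass_smul hP]

variable [Fintype T] {r : T → Ω → ℝ}

theorem entropy_joint_indepCopies_fst (hr : ∀ t, 0 ≤ r t) (F : Ω × T → A) :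
    entropy (joint fun t => indepCopies (r t)) (fun z => F (z.1.1, z.2)) = entropy (joint r) F := by
  have h := push_joint (fun t => indepCopies (r t)) Prod.fst
  simp only [push_fst_indepCopies (hr _)] at h
  rw [← h, entropy_push]

theorem entropy_joint_indepCopies_snd (hr : ∀ t, 0 ≤ r t) (F : Ω × T → A) :
    entropy (joint fun t => indepCopies (r t)) (fun z => F (z.1.2, z.2)) = entropy (joint r) F := by
  rw [← entropy_joint_indepCopies_fst hr]
  conv_lhs => enter [1, 1, t]; rw [← push_swap_indepCopies]
  rw [← push_joint, entropy_push]
  rfl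

theorem entropy_joint_indepCopies_id (hr : ∀ t, 0 ≤ r t) :
    H[joint fun t => indepCopies (r t)] = 2 * H[joint r] - entropy (joint r) Prod.snd := by
  have h₁ := sum_entropy (fun t => indepCopies (r t)) Prod.fst
  have h₂ := sum_entropy r Prod.fst
  rw [entropy_joint_indepCopies_fst hr Prod.snd] at h₁
  have h₃ : ∑ t, H[indepCopies (r t)] = 2 * ∑ t, H[r t] := by
    simp only [entropy_indepCopies_id (hr _), Finset.mul_sum]
  have h₄ : 2 * (H[joint r] - entropy (joint r) Prod.snd)
      = H[joint fun t => indepCopies (r t)] - entropy (joint r) Prod.snd :=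
    (congrArg _ h₂.symm).trans (h₃.symm.trans h₁)
  linarith

end IndependentCopies

section BalogSzemerediGowers

variable {G T σ : Type*} [AddCommGroup G] [Fintype G] [Fintype T] {r : T → G → ℝ}

/-- The entropic Ruzsa distance between `X` and `-X`, that is `H[X + X'] - H[X]` for an independent
copy `X'` of `X`, made homogeneous in the weight of `X`. -/
def selfDistance (r : G → ℝ) : ℝ := (mass r)⁻¹ * H[conv r r] - H[r]

theorem selfDistance_eq {r : G → ℝ} (hr : 0 ≤ r) :
    selfDistance r = entropy (indepCopies r) (fun z => z.1 + z.2) - H[r] := by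
  rw [selfDistance, entropy_indepCopies hr, entropy_conv]
  rfl

theorem sum_selfDistance_eq (hr : ∀ t, 0 ≤ r t) :
    ∑ t, selfDistance (r t)
      = entropy (joint fun t => indepCopies (r t)) (fun z => (z.1.1 + z.1.2, z.2))
        - H[joint r] := by
  have h₁ := sum_entropy (fun t => indepCopies (r t)) fun z => z.1.1 + z.1.2
  have h₂ := sum_entropy r Prod.fst
  rw [entropy_joint_indepCopies_fst hr Prod.snd] at h₁
  simp only [selfDistance_eq (hr _), Finset.sum_sub_distrib, h₁]
  rw [show ∑ t, H[r t] = entropy (joint r) id - entropy (joint r) Prod.snd from h₂]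
  ring

theorem entropy_pair_shift_le (hr : ∀ t, 0 ≤ r t) (u : T → G) (s : T → σ) :
    entropy (joint fun t => indepCopies (r t)) (fun z => (z.1.1, z.1.2 + u z.2, s z.2))
        + entropy (joint r) (fun z => s z.2)
      ≤ entropy (joint r) (fun z => (z.1, s z.2))
        + entropy (joint r) (fun z => (z.1 + u z.2, s z.2)) := by
  have h := entropy_add_le_add (joint_nonneg fun t => indepCopies_nonneg (hr t))
    (X := fun z => (z.1.1, s z.2)) (Y := fun z => (z.1.2 + u z.2, s z.2)) (Z := fun z => s z.2)
    (W := fun z => (z.1.1, z.1.2 + u z.2, s z.2))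
    (fun _ _ h => congrArg Prod.snd h) (fun _ _ h => congrArg Prod.snd h) fun _ _ h => by
      simp_all only [Prod.mk.injEq]
  rwa [entropy_joint_indepCopies_fst hr fun z => (z.1, s z.2),
    entropy_joint_indepCopies_snd hr fun z => (z.1 + u z.2, s z.2),
    entropy_joint_indepCopies_fst hr fun z => s z.2] at h

/-- The entropic Balog–Szemerédi–Gowers inequality. With `A₁`, `A₂` conditionally independent given
`T`, both `(A₁, A₂ + U, S)` and `(A₂, A₁ + U, S)` determine `(A₁ + A₂ + U, S)`, and together they
determine `(A₁, A₂, T)`. -/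
theorem sum_selfDistance_le (hr : ∀ t, 0 ≤ r t) {u : T → G} {s : T → σ}
    (hinj : Function.Injective fun t => (u t, s t)) :
    ∑ t, selfDistance (r t)
      ≤ 2 * entropy (joint r) (fun z => (z.1, s z.2))
        + 2 * entropy (joint r) (fun z => (z.1 + u z.2, s z.2)) + 2 * entropy (joint r) Prod.snd
        - 3 * entropy (joint r) (fun z => s z.2) - 3 * H[joint r] := by
  set R := joint fun t => indepCopies (r t) with hR
  have hR0 : 0 ≤ R := joint_nonneg fun t => indepCopies_nonneg (hr t)
  have hsum := entropy_add_le_add hR0 (X := fun z => (z.1.1 + z.1.2 + u z.2, s z.2)) (Y := Prod.snd)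
    (Z := fun z => s z.2) (W := fun z => (z.1.1 + z.1.2, z.2)) (fun _ _ h => congrArg Prod.snd h)
    (fun _ _ h => congrArg s h) fun z z' h => by
      obtain ⟨⟨h, -⟩, ht⟩ := by simpa only [Prod.mk.injEq] using h
      exact Prod.ext (add_right_cancel (ht ▸ h)) ht
  have hall := entropy_add_le_add hR0 (X := fun z => (z.1.1, z.1.2 + u z.2, s z.2))
    (Y := fun z => (z.1.2, z.1.1 + u z.2, s z.2)) (Z := fun z => (z.1.1 + z.1.2 + u z.2, s z.2))
    (W := id)
    (fun z z' h => by
      obtain ⟨h₁, h₂, hs⟩ := by simpa only [Prod.mk.injEq] using h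
      exact Prod.ext (by simpa only [add_assoc] using congrArg₂ (· + ·) h₁ h₂) hs)
    (fun z z' h => by
      obtain ⟨h₁, h₂, hs⟩ := by simpa only [Prod.mk.injEq] using h
      exact Prod.ext (by simpa only [add_right_comm] using congrArg₂ (· + ·) h₂ h₁) hs)
    fun z z' h => by
      obtain ⟨⟨h₁, h₂, hs⟩, h₃, -⟩ := by simpa only [Prod.mk.injEq] using h
      have hu : u z.2 = u z'.2 := add_left_cancel (h₃ ▸ h₂)
      exact Prod.ext (Prod.ext h₁ h₃) (hinj (Prod.ext hu hs))
  have hpair := entropy_pair_shift_le hr u s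
  have hpair' : entropy R (fun z => (z.1.2, z.1.1 + u z.2, s z.2))
      = entropy R (fun z => (z.1.1, z.1.2 + u z.2, s z.2)) := by
    conv_lhs => rw [hR]; enter [1, 1, t]; rw [← push_swap_indepCopies]
    rw [← push_joint, entropy_push]
    rfl
  rw [entropy_joint_indepCopies_fst hr fun z => s z.2,
    entropy_joint_indepCopies_fst hr Prod.snd] at hsum
  rw [hpair', entropy_joint_indepCopies_id hr] at hall
  rw [sum_selfDistance_eq hr]
  linarith

end BalogSzemerediGowers

section FourVariables

variable {G A : Type*} [AddCommGroup G]

/-- The weight of `X + Y` restricted to the event `X + X' = t.1`, `Y + Y' = t.2`, where `X`, `X'`,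
`Y`, `Y'` are independent of weights `p`, `p'`, `q`, `q'`. -/
def fiberSum (p p' q q' : G → ℝ) (t : G × G) : G → ℝ :=
  conv (fiberWeight p p' t.1) (fiberWeight q q' t.2)

theorem joint_fiberSum [Finite G] (p p' q q' : G → ℝ) :
    joint (fiberSum p p' q q') = push (fun z => (z.1.1 + z.2.1, z.1.1 + z.1.2, z.2.1 + z.2.2))
      (prodDist (prodDist p p') (prodDist q q')) := by
  classical
  have := Fintype.ofFinite G
  trans push (fun z => (z.1.1 + z.2.1, z.1.2, z.2.2))
    (prodDist (joint (fiberWeight p p')) (joint (fiberWeight q q')))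
  · ext ⟨z, u, w⟩
    simp only [push_apply, Fintype.sum_prod_type, Prod.mk.injEq, prodDist, joint, fiberSum, conv,
      finsum_eq_sum_of_fintype, ← eq_sub_iff_add_eq', ite_and, Finset.sum_ite_irrel,
      Finset.sum_const_zero, Finset.sum_ite_eq', Finset.mem_univ, if_true]
  · rw [joint_fiberWeight, joint_fiberWeight, ← push_prodDist, push_push]
    rfl

variable [Fintype G]

/-- The entropy of `(X + Y, X + X', Y + Y')`, for independent `X`, `X'`, `Y`, `Y'` of weights `p`,
`p'`, `q`, `q'`. -/
def pairSumsEntropy (p p' q q' : G → ℝ) : ℝ :=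
  entropy (prodDist (prodDist p p') (prodDist q q'))
    fun z => (z.1.1 + z.2.1, z.1.1 + z.1.2, z.2.1 + z.2.2)

theorem entropy_joint_fiberSum (p p' q q' : G → ℝ) (F : G × G × G → A) :
    entropy (joint (fiberSum p p' q q')) F = entropy (prodDist (prodDist p p') (prodDist q q'))
      fun z => F (z.1.1 + z.2.1, z.1.1 + z.1.2, z.2.1 + z.2.2) := by
  rw [joint_fiberSum, entropy_push]

theorem entropy_sum_four (p p' q q' : G → ℝ) :
    entropy (prodDist (prodDist p p') (prodDist q q')) (fun z => z.1.1 + z.1.2 + (z.2.1 + z.2.2))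
      = H[conv (conv p p') (conv q q')] := by
  rw [conv_eq_push p, conv_eq_push q, conv_push, entropy_push_id]

variable {p p' q q' : G → ℝ}

theorem fiberSum_nonneg {G : Type*} [AddCommGroup G] [Finite G] {p p' q q' : G → ℝ} (hp : 0 ≤ p)
    (hp' : 0 ≤ p') (hq : 0 ≤ q) (hq' : 0 ≤ q') (t : G × G) : 0 ≤ fiberSum p p' q q' t :=
  conv_nonneg (fiberWeight_nonneg hp hp' _) (fiberWeight_nonneg hq hq' _)

theorem entropy_of_iff_sums (hp : IsDist p) (hp' : IsDist p') (hq : IsDist q) (hq' : IsDist q')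
    {F : (G × G) × G × G → A} (hF : ∀ z z', F z = F z' ↔
      z.1.1 + z.1.2 = z'.1.1 + z'.1.2 ∧ z.2.1 + z.2.2 = z'.2.1 + z'.2.2) :
    entropy (prodDist (prodDist p p') (prodDist q q')) F = H[conv p p'] + H[conv q q'] := by
  rw [entropy_prodDist_of_iff (prodDist_nonneg hp.nonneg hp'.nonneg)
    (prodDist_nonneg hq.nonneg hq'.nonneg) (X := fun z => z.1 + z.2) (Y := fun z => z.1 + z.2) hF]
  simp only [mass_prodDist, hp.mass_eq_one, hp'.mass_eq_one, hq.mass_eq_one, hq'.mass_eq_one,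
    mul_one, one_mul, entropy_conv, id]

theorem push_prodProdProdComm {G : Type*} (p p' q q' : G → ℝ) :
    push (Equiv.prodProdProdComm G G G G) (prodDist (prodDist p q) (prodDist p' q'))
      = prodDist (prodDist p p') (prodDist q q') := by
  rw [← push_comp_equiv (Equiv.prodProdProdComm G G G G) (prodDist (prodDist p p') _)]
  exact congrArg _ (funext fun _ => mul_mul_mul_comm _ _ _ _)

theorem entropy_of_iff_middle_sums (hp : IsDist p) (hp' : IsDist p') (hq : IsDist q)
    (hq' : IsDist q') {F : (G × G) × G × G → A} (hF : ∀ z z', F z = F z' ↔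
      z.1.1 + z.2.1 = z'.1.1 + z'.2.1 ∧ z.1.2 + z.2.2 = z'.1.2 + z'.2.2) :
    entropy (prodDist (prodDist p p') (prodDist q q')) F = H[conv p q] + H[conv p' q'] := by
  rw [← push_prodProdProdComm, entropy_push]
  exact entropy_of_iff_sums hp hq hp' hq' fun z z' => hF _ _

theorem entropy_of_iff_cross_sums (hp : IsDist p) (hp' : IsDist p') (hq : IsDist q)
    (hq' : IsDist q') {F : (G × G) × G × G → A} (hF : ∀ z z', F z = F z' ↔
      z.1.1 + z.2.2 = z'.1.1 + z'.2.2 ∧ z.1.2 + z.2.1 = z'.1.2 + z'.2.1) :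
    entropy (prodDist (prodDist p p') (prodDist q q')) F = H[conv p q'] + H[conv p' q] := by
  rw [← push_prodComm q', ← push_id (prodDist p p'), ← push_prodDist, entropy_push]
  exact entropy_of_iff_middle_sums hp hp' hq' hq fun z z' => hF _ _

theorem sum_entropy_fiberSum (hp : IsDist p) (hp' : IsDist p') (hq : IsDist q) (hq' : IsDist q') :
    ∑ t, H[fiberSum p p' q q' t] = pairSumsEntropy p p' q q' - (H[conv p p'] + H[conv q q']) := by
  have h := sum_entropy (fiberSum p p' q q') Prod.fst
  rw [entropy_joint_fiberSum, entropy_joint_fiberSum,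
    entropy_of_iff_sums hp hp' hq hq' fun _ _ => Prod.mk_inj] at h
  exact h

theorem sum_doubling_fiberWeight (hp : IsDist p) (hp' : IsDist p') (hq : IsDist q)
    (hq' : IsDist q') :
    ∑ t : G × G, doubling id (fiberWeight p p' t.1) (fiberWeight q q' t.2)
      = H[p] + H[p'] + H[q] + H[q'] - pairSumsEntropy p p' q q' := by
  have h := sum_entropy_fiberSum hp hp' hq hq'
  have hpe := sum_entropy_fiberWeight hp.nonneg hp'.nonneg
  have hqe := sum_entropy_fiberWeight hq.nonneg hq'.nonneg
  simp only [fiberSum] at h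
  simp only [doubling, pairEntropy, Finset.sum_sub_distrib, Finset.sum_add_distrib, h]
  simp only [Fintype.sum_prod_type, ← Finset.mul_sum, ← Finset.sum_mul, sum_mass_fiberWeight, hpe,
    hqe, doubling, pairEntropy, hp.mass_eq_one, hp'.mass_eq_one, hq.mass_eq_one, hq'.mass_eq_one]
  ring

/-- The conditional mutual information of `(X + Y, X' + Y')` and `(X + X', Y + Y')` given
`X + X' + Y + Y'`, for independent `X`, `X'`, `Y`, `Y'` of weights `p`, `p'`, `q`, `q'`. -/
def sumInfo (p p' q q' : G → ℝ) : ℝ :=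
  H[conv p q] + H[conv p' q'] + H[conv p p'] + H[conv q q'] - H[conv (conv p p') (conv q q')]
    - pairSumsEntropy p p' q q'

theorem sumInfo_nonneg (hp : IsDist p) (hp' : IsDist p') (hq : IsDist q) (hq' : IsDist q') :
    0 ≤ sumInfo p p' q q' := by
  have h := entropy_add_le_add
    (prodDist_nonneg (prodDist_nonneg hp.nonneg hp'.nonneg) (prodDist_nonneg hq.nonneg hq'.nonneg))
    (X := fun z => (z.1.1 + z.2.1, z.1.2 + z.2.2)) (Y := fun z => (z.1.1 + z.1.2, z.2.1 + z.2.2))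
    (Z := fun z => z.1.1 + z.1.2 + (z.2.1 + z.2.2))
    (W := fun z => (z.1.1 + z.2.1, z.1.1 + z.1.2, z.2.1 + z.2.2))
    (fun z z' h => by
      simp only [Prod.mk.injEq] at h
      simp only [add_add_add_comm _ _ _ (_ : G), h.1, h.2])
    (fun z z' h => by
      simp only [Prod.mk.injEq] at h
      simp only [h.1, h.2])
    (fun z z' h => by
      simp only [Prod.mk.injEq] at h ⊢
      exact ⟨h.1.1, h.2⟩)
  rw [entropy_of_iff_middle_sums hp hp' hq hq' fun _ _ => Prod.mk_inj,
    entropy_of_iff_sums hp hp' hq hq' fun _ _ => Prod.mk_inj, entropy_sum_four] at h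
  rw [sumInfo, pairSumsEntropy]
  linarith

/-- The fibring identity. -/
theorem doubling_add_doubling_add_sumInfo (hp : IsDist p) (hp' : IsDist p') (hq : IsDist q)
    (hq' : IsDist q') :
    doubling id p q + doubling id p' q' + sumInfo p p' q q'
      = doubling id (conv p p') (conv q q')
        + ∑ t : G × G, doubling id (fiberWeight p p' t.1) (fiberWeight q q' t.2) := by
  rw [sum_doubling_fiberWeight hp hp' hq hq', sumInfo]
  simp only [doubling, pairEntropy, mass_conv, hp.mass_eq_one, hp'.mass_eq_one, hq.mass_eq_one,
    hq'.mass_eq_one]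
  ring

theorem conv_conv_conv_comm {G : Type*} [AddCommGroup G] [Finite G] (p p' q q' : G → ℝ) :
    conv (conv p p') (conv q q') = conv (conv p q) (conv p' q') := by
  rw [conv_assoc, ← conv_assoc p', conv_comm p', conv_assoc q, ← conv_assoc]

section CharTwo

variable [Module (ZMod 2) G]

theorem add_add_add_cancel_middle {G : Type*} [AddCommGroup G] [Module (ZMod 2) G] (x y z : G) :
    x + z + (z + y) = x + y := by
  rw [add_assoc, ← add_assoc z, ZModModule.add_self, zero_add]

theorem pairSumsEntropy_comm (p q : G → ℝ) : pairSumsEntropy p q q p = pairSumsEntropy p p q q := by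
  rw [pairSumsEntropy, ← push_prodComm p q]
  nth_rw 1 [← push_id (prodDist p q)]
  rw [← push_prodDist, ← push_prodProdProdComm p q p q, push_push, entropy_push]
  refine entropy_congr fun ⟨⟨x, x'⟩, y, y'⟩ ⟨⟨a, a'⟩, b, b'⟩ => ?_
  change (x + y', x + y, y' + x') = (a + b', a + b, b' + a')
    ↔ (x + y, x + x', y + y') = (a + b, a + a', b + b')
  simp only [Prod.mk.injEq]
  constructor
  · rintro ⟨h₁, h₂, h₃⟩
    refine ⟨h₂, ?_, ?_⟩
    · rw [← add_add_add_cancel_middle x x' y', h₁, h₃, add_add_add_cancel_middle]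
    · rw [← add_add_add_cancel_middle y y' x, add_comm y, h₂, h₁, add_comm a,
        add_add_add_cancel_middle]
  · rintro ⟨h₁, h₂, h₃⟩
    have h₄ : x + y' = a + b' := by
      rw [← add_add_add_cancel_middle x y' y, h₁, h₃, add_add_add_cancel_middle]
    refine ⟨h₄, h₁, ?_⟩
    rw [← add_add_add_cancel_middle y' x' x, add_comm y', h₄, h₂, add_comm a,
      add_add_add_cancel_middle]

theorem sum_selfDistance_fiberSum_le (hp : IsDist p) (hq : IsDist q) :
    ∑ t, selfDistance (fiberSum p q q p t) ≤ 2 * sumInfo p p q q + sumInfo p q q p := by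
  have hcancel : ∀ z : (G × G) × G × G, z.1.1 + z.2.1 + (z.1.1 + z.1.2) = z.1.2 + z.2.1 := by
    intro z
    rw [add_comm z.1.1 z.2.1, add_add_add_cancel_middle, add_comm]
  have h := sum_selfDistance_le (fiberSum_nonneg hp.nonneg hq.nonneg hq.nonneg hp.nonneg)
    (u := Prod.fst) (s := fun t => t.1 + t.2) fun _ _ h => by
      obtain ⟨h₁, h₂⟩ := Prod.mk_inj.1 h
      exact Prod.ext h₁ (add_left_cancel (h₁ ▸ h₂))
  simp only [entropy_joint_fiberSum, entropy_sum_four, hcancel, id] at h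
  rw [← pairSumsEntropy, entropy_of_iff_sums hp hq hq hp fun _ _ => Prod.mk_inj,
    entropy_of_iff_middle_sums hp hq hq hp fun z z' => ?_,
    entropy_of_iff_cross_sums hp hq hq hp fun z z' => ?_] at h
  · rw [sumInfo, sumInfo, ← pairSumsEntropy_comm, conv_conv_conv_comm p p, conv_comm q p]
    rw [conv_comm q p] at h
    linarith
  · rw [Prod.mk_inj, and_comm]
    refine and_congr_left fun h => ?_
    rw [add_comm z.2.1, add_comm z'.2.1, add_add_add_comm, add_add_add_comm z'.1.1, h, add_left_inj]
  · rw [Prod.mk_inj]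
    refine and_congr_right fun h => ?_
    rw [add_add_add_comm, add_add_add_comm z'.1.1, h, add_right_inj]

end CharTwo

end FourVariables

/-! ### The entropic polynomial Freiman–Ruzsa theorem -/

section PFRFunctional

variable {Ω G T : Type*}

theorem continuous_entropy_id [Fintype Ω] : Continuous fun p : Ω → ℝ => H[p] := by
  simp only [entropy_eq_sum_negMulLog, push_id, mass]
  have := continuous_negMulLog
  fun_prop

variable [AddCommGroup G]

theorem continuous_conv [Finite G] : Continuous fun z : (G → ℝ) × (G → ℝ) => conv z.1 z.2 := by
  have := Fintype.ofFinite G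
  refine continuous_pi fun x => ?_
  simp only [conv, finsum_eq_sum_of_fintype]
  fun_prop

theorem selfDistance_smul [Fintype G] {r : G → ℝ} (hr : 0 ≤ r) {c : ℝ} (hc : 0 ≤ c) :
    selfDistance (c • r) = c * selfDistance r := by
  rw [selfDistance, selfDistance, conv_smul_smul, mass_smul, entropy_smul hr hc,
    entropy_smul (conv_nonneg hr hr) (mul_nonneg hc hc)]
  rcases eq_or_ne c 0 with rfl | hc
  · simp only [zero_mul, mul_zero, sub_self]
  · field_simp

theorem conv_sum_left [Finite G] [Fintype T] (r : T → G → ℝ) (q : G → ℝ) :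
    conv (∑ t, r t) q = ∑ t, conv (r t) q := by
  have := Fintype.ofFinite G
  ext x
  simp only [conv, finsum_eq_sum_of_fintype, Finset.sum_apply, Finset.sum_mul]
  exact Finset.sum_comm

theorem conv_sum_right [Finite G] [Fintype T] (q : G → ℝ) (r : T → G → ℝ) :
    conv q (∑ t, r t) = ∑ t, conv q (r t) := by
  simp only [conv_comm q, conv_sum_left]

variable [Fintype G] {z p q p' q' : G → ℝ}

theorem sum_fiberSum (p p' q q' : G → ℝ) :
    ∑ t, fiberSum p p' q q' t = (mass p' * mass q') • conv p q := by
  simp only [fiberSum, Fintype.sum_prod_type, ← conv_sum_right, ← conv_sum_left, sum_fiberWeight,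
    conv_smul_smul]

theorem sum_mass_fiberSum (hp : IsDist p) (hp' : IsDist p') (hq : IsDist q) (hq' : IsDist q') :
    ∑ t, mass (fiberSum p p' q q' t) = 1 := by
  simp only [fiberSum, mass_conv, Fintype.sum_prod_type, ← Finset.mul_sum, ← Finset.sum_mul,
    sum_mass_fiberWeight, hp.mass_eq_one, hp'.mass_eq_one, hq.mass_eq_one, hq'.mass_eq_one, one_mul]

theorem sum_entropy_conv_le [Fintype T] (hz : 0 ≤ z) {r : T → G → ℝ} (hr : ∀ t, 0 ≤ r t) :
    ∑ t, H[conv z (r t)] ≤ H[conv z (∑ t, r t)] := by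
  rw [conv_sum_right]
  exact sum_entropy_le (fun t => conv_nonneg hz (hr t)) id

/-- The functional `d[X ; Y] + (d[Z ; X] + d[Z ; Y]) / 16` of entropic Ruzsa distances, up to a
constant depending on `Z` only and made homogeneous in the weights of `X` and `Y`; its minimisers
are translates of a uniform distribution on a subspace. -/
def pfrFunctional (z p q : G → ℝ) : ℝ :=
  H[conv p q] - 17 / 32 * pairEntropy id p q
    + 1 / 16 * (mass q * H[conv z p] + mass p * H[conv z q])

theorem continuous_pfrFunctional (z : G → ℝ) :
    Continuous fun w : (G → ℝ) × (G → ℝ) => pfrFunctional z w.1 w.2 := by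
  have hz : Continuous fun p : G → ℝ => H[conv z p] :=
    continuous_entropy_id.comp (continuous_conv.comp (Continuous.prodMk_right z))
  have hconv : Continuous fun w : (G → ℝ) × (G → ℝ) => H[conv w.1 w.2] :=
    continuous_entropy_id.comp continuous_conv
  have hmass : Continuous (mass : (G → ℝ) → ℝ) := by unfold mass; fun_prop
  have hent := continuous_entropy_id (Ω := G)
  exact (hconv.sub (((hmass.comp continuous_snd).mul (hent.comp continuous_fst)).add
      ((hmass.comp continuous_fst).mul (hent.comp continuous_snd)) |>.const_mul _)).add
    (((hmass.comp continuous_snd).mul (hz.comp continuous_fst)).add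
      ((hmass.comp continuous_fst).mul (hz.comp continuous_snd)) |>.const_mul _)

theorem pfrFunctional_smul_smul (hz : 0 ≤ z) (hp : 0 ≤ p) (hq : 0 ≤ q) {c d : ℝ} (hc : 0 ≤ c)
    (hd : 0 ≤ d) : pfrFunctional z (c • p) (d • q) = c * d * pfrFunctional z p q := by
  have hzsmul : ∀ (c : ℝ) (p : G → ℝ), conv z (c • p) = c • conv z p := fun c p => by
    simpa only [one_smul, one_mul] using conv_smul_smul 1 c z p
  simp only [pfrFunctional, pairEntropy, conv_smul_smul, hzsmul, mass_smul, entropy_smul hp hc,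
    entropy_smul hq hd, entropy_smul (conv_nonneg hp hq) (mul_nonneg hc hd),
    entropy_smul (conv_nonneg hz hp) hc, entropy_smul (conv_nonneg hz hq) hd]
  ring

theorem pfrFunctional_self_of_isDist {r : G → ℝ} (hr : IsDist r) :
    pfrFunctional z r r = selfDistance r - H[r] / 16 + H[conv z r] / 8 := by
  rw [pfrFunctional, selfDistance, pairEntropy, hr.mass_eq_one]
  ring

/-- `p`, `q` are probability weights minimising `pfrFunctional z`. -/
structure IsPFRMinimizer (z p q : G → ℝ) : Prop where
  isDist_left : IsDist p
  isDist_right : IsDist q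
  le_of_isDist : ∀ {p' q'}, IsDist p' → IsDist q' → pfrFunctional z p q ≤ pfrFunctional z p' q'

theorem exists_isPFRMinimizer (z : G → ℝ) : ∃ p q, IsPFRMinimizer z p q := by
  classical
  have hne : (stdSimplex ℝ G ×ˢ stdSimplex ℝ G).Nonempty :=
    ⟨(Pi.single 0 1, Pi.single 0 1), single_mem_stdSimplex ℝ 0, single_mem_stdSimplex ℝ 0⟩
  have hmem : ∀ {p : G → ℝ}, p ∈ stdSimplex ℝ G ↔ IsDist p := isDist_iff.symm
  obtain ⟨⟨p, q⟩, ⟨hp, hq⟩, hmin⟩ :=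
    ((isCompact_stdSimplex ℝ G).prod (isCompact_stdSimplex ℝ G)).exists_isMinOn hne
      (continuous_pfrFunctional z).continuousOn
  exact ⟨p, q, hmem.1 hp, hmem.1 hq, fun {p' q'} hp' hq' =>
    isMinOn_iff.1 hmin (p', q') ⟨hmem.2 hp', hmem.2 hq'⟩⟩

namespace IsPFRMinimizer

theorem symm (h : IsPFRMinimizer z p q) : IsPFRMinimizer z q p := by
  have hcomm : ∀ p q, pfrFunctional z p q = pfrFunctional z q p := fun p q => by
    rw [pfrFunctional, pfrFunctional, conv_comm, pairEntropy_comm, add_comm (mass q * _)]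
  refine ⟨h.isDist_right, h.isDist_left, fun {p' q'} hp' hq' => ?_⟩
  rw [hcomm, hcomm p']
  exact h.le_of_isDist hq' hp'

theorem mass_mul_le (h : IsPFRMinimizer z p q) (hz : 0 ≤ z) (hp' : 0 ≤ p') (hq' : 0 ≤ q') :
    mass p' * mass q' * pfrFunctional z p q ≤ pfrFunctional z p' q' := by
  obtain ⟨p₁, hp₁, hpp⟩ := exists_eq_smul_isDist hp'
  obtain ⟨q₁, hq₁, hqq⟩ := exists_eq_smul_isDist hq'
  have hmass := mul_nonneg (mass_nonneg hp') (mass_nonneg hq')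
  calc mass p' * mass q' * pfrFunctional z p q
      ≤ mass p' * mass q' * pfrFunctional z p₁ q₁ :=
        mul_le_mul_of_nonneg_left (h.le_of_isDist hp₁ hq₁) hmass
    _ = pfrFunctional z p' q' := by
        rw [← pfrFunctional_smul_smul hz hp₁.nonneg hq₁.nonneg (mass_nonneg hp')
          (mass_nonneg hq'), ← hpp, ← hqq]

theorem le_conv_conv (h : IsPFRMinimizer z p q) (hz : IsDist z) (hp' : IsDist p')
    (hq' : IsDist q') :
    pfrFunctional z p q ≤ H[conv (conv p p') (conv q q')] - 15 / 32 * (H[conv p p'] + H[conv q q'])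
      + 1 / 16 * (H[conv z p'] + H[conv z q'] - H[p'] - H[q']) := by
  have hle := h.le_of_isDist (h.isDist_left.conv hp') (h.isDist_right.conv hq')
  have hkvp := entropy_conv_conv_add_le hz.nonneg hp'.nonneg h.isDist_left.nonneg
  have hkvq := entropy_conv_conv_add_le hz.nonneg hq'.nonneg h.isDist_right.nonneg
  rw [conv_assoc, conv_comm p'] at hkvp
  rw [conv_assoc, conv_comm q'] at hkvq
  simp only [pfrFunctional, pairEntropy, mass_conv, hz.mass_eq_one, h.isDist_left.mass_eq_one,
    h.isDist_right.mass_eq_one, hp'.mass_eq_one, hq'.mass_eq_one, one_mul] at hle hkvp hkvq ⊢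
  linarith

theorem le_pairSumsEntropy (h : IsPFRMinimizer z p q) (hz : IsDist z) (hp' : IsDist p')
    (hq' : IsDist q') :
    pfrFunctional z p q ≤ pairSumsEntropy p p' q q' - (H[conv p p'] + H[conv q q'])
      - 17 / 32 * (doubling id p p' + doubling id q q') + 1 / 16 * (H[conv z p] + H[conv z q]) := by
  have hp := h.isDist_left
  have hq := h.isDist_right
  have hle := Finset.sum_le_sum fun (t : G × G) (_ : t ∈ Finset.univ) => h.mass_mul_le hz.nonneg
    (fiberWeight_nonneg hp.nonneg hp'.nonneg t.1) (fiberWeight_nonneg hq.nonneg hq'.nonneg t.2)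
  have hsum := sum_entropy_fiberSum hp hp' hq hq'
  have hzp := sum_entropy_conv_le hz.nonneg (fiberWeight_nonneg hp.nonneg hp'.nonneg)
  have hzq := sum_entropy_conv_le hz.nonneg (fiberWeight_nonneg hq.nonneg hq'.nonneg)
  rw [sum_fiberWeight, hp'.mass_eq_one, one_smul] at hzp
  rw [sum_fiberWeight, hq'.mass_eq_one, one_smul] at hzq
  simp only [fiberSum, Fintype.sum_prod_type] at hsum
  conv_rhs at hle => simp only [pfrFunctional, pairEntropy]
  simp only [Fintype.sum_prod_type, Finset.sum_add_distrib, Finset.sum_sub_distrib,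
    ← Finset.mul_sum, ← Finset.sum_mul, sum_mass_fiberWeight, hsum,
    sum_entropy_fiberWeight hp.nonneg hp'.nonneg, sum_entropy_fiberWeight hq.nonneg hq'.nonneg,
    hp.mass_eq_one, hp'.mass_eq_one, hq.mass_eq_one, hq'.mass_eq_one] at hle
  linarith

theorem mass_mul_le_self (h : IsPFRMinimizer z p q) (hz : 0 ≤ z) {r : G → ℝ} (hr : 0 ≤ r) :
    mass r * pfrFunctional z p q ≤ selfDistance r - H[r] / 16 + H[conv z r] / 8 := by
  obtain ⟨r₁, hr₁, hrr⟩ := exists_eq_smul_isDist hr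
  have hm := mass_nonneg hr
  have hzr : conv z r = mass r • conv z r₁ := by
    simpa only [one_smul, one_mul, ← hrr] using conv_smul_smul 1 (mass r) z r₁
  have hle := mul_le_mul_of_nonneg_left (h.le_of_isDist hr₁ hr₁) hm
  rw [pfrFunctional_self_of_isDist hr₁] at hle
  rw [hzr, entropy_smul (conv_nonneg hz hr₁.nonneg) hm]
  have hself := selfDistance_smul hr₁.nonneg hm
  have hent := entropy_smul hr₁.nonneg hm id
  rw [← hrr] at hself hent
  rw [hself, hent]
  linarith

theorem le_sum_selfDistance (h : IsPFRMinimizer z p q) (hz : 0 ≤ z) :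
    pfrFunctional z p q ≤ ∑ t, selfDistance (fiberSum p q q p t)
      - (pairSumsEntropy p q q p - 2 * H[conv p q]) / 16 + H[conv z (conv p q)] / 8 := by
  have hp := h.isDist_left
  have hq := h.isDist_right
  have hr := fiberSum_nonneg hp.nonneg hq.nonneg hq.nonneg hp.nonneg
  have hzr := sum_entropy_conv_le hz hr
  have hle := Finset.sum_le_sum fun t (_ : t ∈ Finset.univ) => h.mass_mul_le_self hz (hr t)
  rw [sum_fiberSum, hp.mass_eq_one, hq.mass_eq_one, one_mul, one_smul] at hzr
  rw [Finset.sum_add_distrib, Finset.sum_sub_distrib, ← Finset.sum_mul, ← Finset.sum_div,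
    ← Finset.sum_div, sum_mass_fiberSum hp hq hq hp, sum_entropy_fiberSum hp hq hq hp,
    conv_comm q p] at hle
  linarith

theorem sumInfo_self_le (h : IsPFRMinimizer z p q) (hz : IsDist z) :
    sumInfo p p q q ≤ (2 * H[conv p q] - H[p] - H[q]) / 8 := by
  have hp := h.isDist_left
  have hq := h.isDist_right
  have hsum := h.le_conv_conv hz hp hq
  have hfib := h.le_pairSumsEntropy hz hp hq
  have hkvp := entropy_conv_conv_add_le hp.nonneg hq.nonneg hp.nonneg
  have hkvq := entropy_conv_conv_add_le hq.nonneg hp.nonneg hq.nonneg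
  have hpp := mass_mul_entropy_le_conv hq.nonneg (hp.conv hp).nonneg (AddMonoidHom.id G)
  have hqq := mass_mul_entropy_le_conv hp.nonneg (hq.conv hq).nonneg (AddMonoidHom.id G)
  rw [← conv_assoc, conv_comm q p] at hpp
  rw [← conv_assoc] at hqq
  rw [conv_comm q p] at hkvp hkvq
  simp only [pfrFunctional, sumInfo, doubling, pairEntropy, AddMonoidHom.coe_id, hp.mass_eq_one,
    hq.mass_eq_one, one_mul] at *
  linarith

theorem pairSumsEntropy_ge (h : IsPFRMinimizer z p q) (hz : IsDist z) :
    31 / 16 * H[conv p q] + 17 / 32 * (H[p] + H[q]) ≤ pairSumsEntropy p q q p := by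
  have hfib := h.le_pairSumsEntropy hz h.isDist_right h.isDist_left
  rw [conv_comm q p] at hfib
  simp only [pfrFunctional, doubling, pairEntropy, h.isDist_left.mass_eq_one,
    h.isDist_right.mass_eq_one, one_mul, conv_comm q p] at hfib
  linarith

theorem sumInfo_swap_le (h : IsPFRMinimizer z p q) (hz : IsDist z) :
    sumInfo p q q p ≤ (2 * H[conv p q] - H[p] - H[q]) / 16 := by
  have hsum := h.le_conv_conv hz h.isDist_right h.isDist_left
  have hfib := h.pairSumsEntropy_ge hz
  simp only [pfrFunctional, sumInfo, pairEntropy, h.isDist_left.mass_eq_one,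
    h.isDist_right.mass_eq_one, one_mul, conv_comm q p] at *
  linarith

section CharTwo

variable [Module (ZMod 2) G]

theorem entropy_conv_eq_left (h : IsPFRMinimizer z p q) (hz : IsDist z) : H[conv p q] = H[p] := by
  have hp := h.isDist_left
  have hq := h.isDist_right
  have hle := h.le_sum_selfDistance hz.nonneg
  have hbsg := sum_selfDistance_fiberSum_le hp hq
  have hself := h.sumInfo_self_le hz
  have hswap := h.sumInfo_swap_le hz
  have hpair := h.pairSumsEntropy_ge hz
  have hkvp := entropy_conv_conv_add_le hz.nonneg hp.nonneg hq.nonneg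
  have hkvq := entropy_conv_conv_add_le hz.nonneg hq.nonneg hp.nonneg
  have hge := mass_mul_entropy_le_conv hp.nonneg hq.nonneg (AddMonoidHom.id G)
  have hge' := mass_mul_entropy_le_conv hq.nonneg hp.nonneg (AddMonoidHom.id G)
  rw [conv_assoc] at hkvp hkvq
  simp only [pfrFunctional, pairEntropy, AddMonoidHom.coe_id, hz.mass_eq_one, hp.mass_eq_one,
    hq.mass_eq_one, one_mul, conv_comm q p] at *
  linarith

theorem entropy_conv_eq_right (h : IsPFRMinimizer z p q) (hz : IsDist z) : H[conv p q] = H[q] := by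
  rw [conv_comm]
  exact h.symm.entropy_conv_eq_left hz

end CharTwo

end IsPFRMinimizer

end PFRFunctional

section Periods

variable {Ω A G : Type*}

theorem entropy_eq_zero_of_forall_eq [Fintype Ω] {P : Ω → ℝ} {X : Ω → A} {a : A}
    (h : ∀ ω, P ω ≠ 0 → X ω = a) : entropy P X = 0 := by
  have hpush : push X P a = mass P := by
    classical
    rw [push_apply, mass]
    refine Finset.sum_congr rfl fun ω _ => ?_
    by_cases hω : X ω = a
    · rw [if_pos hω]
    · rw [if_neg hω, not_imp_comm.1 (h ω) hω]
  refine Finset.sum_eq_zero fun ω _ => ?_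
  rcases eq_or_ne (P ω) 0 with h0 | h0
  · rw [h0, zero_mul]
  · rw [h ω h0, hpush, sub_self, mul_zero]

variable [AddCommGroup G]

/-- The case of equality in Jensen's inequality for the entropy of `X + Y` given `Y`. -/
theorem eq_of_entropy_conv_eq [Fintype G] {p q : G → ℝ} (hp : IsDist p) (hq : IsDist q)
    (h : H[conv p q] = H[p]) (x : G) {y y' : G} (hy : q y ≠ 0) (hy' : q y' ≠ 0) :
    p (x - y) = p (x - y') := by
  have hconv : ∀ x, conv p q x = ∑ y, q y • p (x - y) := fun x => by
    rw [conv_comm, conv, finsum_eq_sum_of_fintype]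
    rfl
  have hle : ∀ x, ∑ y, q y • negMulLog (p (x - y)) ≤ negMulLog (∑ y, q y • p (x - y)) := fun x =>
    concaveOn_negMulLog.le_map_sum (fun i _ => hq.nonneg i) hq.mass_eq_one fun i _ => hp.nonneg _
  have hsum : ∑ x, ∑ y, q y • negMulLog (p (x - y)) = ∑ x, negMulLog (∑ y, q y • p (x - y)) := by
    calc ∑ x, ∑ y, q y • negMulLog (p (x - y))
        = ∑ y, q y * ∑ x, negMulLog (p x) := by
          rw [Finset.sum_comm]
          refine Finset.sum_congr rfl fun y _ => ?_
          rw [← Equiv.sum_comp (Equiv.subRight y) fun x => negMulLog (p x), Finset.mul_sum]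
          rfl
      _ = H[p] := by
          rw [← Finset.sum_mul, ← mass, hq.mass_eq_one, one_mul, entropy_eq_sum_negMulLog, push_id,
            hp.mass_eq_one, negMulLog_one, sub_zero]
      _ = ∑ x, negMulLog (∑ y, q y • p (x - y)) := by
          rw [← h, entropy_eq_sum_negMulLog, push_id, mass_conv, hp.mass_eq_one, hq.mass_eq_one,
            one_mul, negMulLog_one, sub_zero]
          simp only [hconv]
  have heq := (Finset.sum_eq_sum_iff_of_le fun x _ => hle x).1 hsum x (Finset.mem_univ x)
  have hconst := (strictConcaveOn_negMulLog.map_sum_eq_iff' (fun i _ => hq.nonneg i)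
    hq.mass_eq_one fun i _ => hp.nonneg _).1 heq.symm
  rw [hconst y (Finset.mem_univ _) hy, hconst y' (Finset.mem_univ _) hy']

variable [Module (ZMod 2) G]

/-- The subspace of periods of a function on a vector space over `𝔽₂`. -/
def periods (p : G → ℝ) : Submodule (ZMod 2) G :=
  AddSubgroup.toZModSubmodule 2
    { carrier := {v | Function.Periodic p v}
      zero_mem' := fun x => congrArg p (add_zero x)
      add_mem' := Function.Periodic.add_period
      neg_mem' := Function.Periodic.neg }

theorem sub_mem_periods [Fintype G] {p q : G → ℝ} (hp : IsDist p) (hq : IsDist q)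
    (h : H[conv p q] = H[p]) {y y' : G} (hy : q y ≠ 0) (hy' : q y' ≠ 0) : y - y' ∈ periods p := by
  refine fun x => ?_
  have := eq_of_entropy_conv_eq hp hq h (x + y) hy' hy
  rwa [add_sub_assoc, add_sub_cancel_right] at this

theorem periods_le_periods_conv [Finite G] (p q : G → ℝ) : periods p ≤ periods (conv q p) := by
  intro v hv x
  simp only [conv]
  exact finsum_congr fun y => by rw [add_sub_right_comm, hv]

variable (V : Submodule (ZMod 2) G)

theorem push_mkQ_apply (p : G → ℝ) (x : G) : push V.mkQ p (V.mkQ x) = ∑ᶠ v : V, p (x + v) := by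
  have : V.mkQ ⁻¹' {V.mkQ x} = Set.range fun v : V => x + v := by
    ext y
    simp only [Set.mem_preimage, Set.mem_singleton_iff, Submodule.mkQ_apply,
      Submodule.Quotient.eq, Set.mem_range, Subtype.exists, exists_prop]
    exact ⟨fun h => ⟨_, h, add_sub_cancel x y⟩, fun ⟨v, hv, h⟩ => by rwa [← h, add_sub_cancel_left]⟩
  rw [push, this, finsum_mem_range fun _ _ h => Subtype.ext (add_left_cancel h)]

variable {V}

theorem entropy_of_le_periods [Fintype G] {p : G → ℝ} (hV : V ≤ periods p) :
    H[p] = entropy p V.mkQ + mass p * log (Nat.card V) := by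
  have hcard : (Nat.card V : ℝ) ≠ 0 := Nat.cast_ne_zero.2 Nat.card_pos.ne'
  have hpush : ∀ x, push V.mkQ p (V.mkQ x) = Nat.card V * p x := fun x => by
    have := Fintype.ofFinite V
    rw [push_mkQ_apply, finsum_congr fun v : V => hV v.2 x, finsum_eq_sum_of_fintype,
      Finset.sum_const, nsmul_eq_mul, Finset.card_univ, Nat.card_eq_fintype_card]
  simp only [entropy, hpush, push_id, id]
  rw [mass, Finset.sum_mul, ← Finset.sum_add_distrib]
  refine Finset.sum_congr rfl fun x _ => ?_
  rcases eq_or_ne (p x) 0 with h | h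
  · simp only [h, zero_mul, add_zero]
  · rw [log_mul hcard h]
    ring

variable (V)

theorem isDist_unifOn [Finite G] : IsDist (unifOn (V : Set G)) := by
  have hcard : (Nat.card V : ℝ) ≠ 0 := Nat.cast_ne_zero.2 Nat.card_pos.ne'
  refine ⟨fun x => Set.indicator_nonneg (fun _ _ => inv_nonneg.2 (Nat.cast_nonneg _)) x, ?_⟩
  have := Fintype.ofFinite V
  simp only [unifOn, ← finsum_mem_def, ← finsum_set_coe_eq_finsum_mem]
  rw [finsum_eq_sum_of_fintype, Finset.sum_const, Finset.card_univ, nsmul_eq_mul,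
    ← Nat.card_eq_fintype_card]
  exact mul_inv_cancel₀ hcard

theorem le_periods_unifOn : V ≤ periods (unifOn (V : Set G)) := fun v hv x => by
  classical
  simp only [unifOn, Set.indicator_apply, SetLike.mem_coe, V.add_mem_iff_left hv]

theorem entropy_unifOn_mkQ [Fintype G] : entropy (unifOn (V : Set G)) V.mkQ = 0 :=
  entropy_eq_zero_of_forall_eq (a := 0) fun _ hx =>
    (Submodule.Quotient.mk_eq_zero V).2 (Set.mem_of_indicator_ne_zero hx)

theorem entropy_unifOn [Fintype G] : H[unifOn (V : Set G)] = log (Nat.card V) := by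
  rw [entropy_of_le_periods (le_periods_unifOn V), entropy_unifOn_mkQ,
    (isDist_unifOn V).mass_eq_one, one_mul, zero_add]

theorem entropy_id_le [Fintype G] {p : G → ℝ} (hp : 0 ≤ p) :
    H[p] ≤ entropy p V.mkQ + mass p * log (Nat.card V) := by
  have hu := isDist_unifOn V
  have hinv := entropy_of_le_periods ((le_periods_unifOn V).trans (periods_le_periods_conv _ p))
  have hge := mass_mul_entropy_le_conv hu.nonneg hp (AddMonoidHom.id G)
  have hproj := entropy_conv_le hp hu.nonneg V.mkQ
  rw [pairEntropy, entropy_unifOn_mkQ, hu.mass_eq_one] at hproj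
  rw [conv_comm, hu.mass_eq_one, AddMonoidHom.coe_id] at hge
  rw [mass_conv, hu.mass_eq_one] at hinv
  linarith

end Periods

section PFR

variable {G : Type*} [AddCommGroup G] [Module (ZMod 2) G] [Fintype G] {z : G → ℝ}

theorem IsDist.exists_submodule_entropy_le (hz : IsDist z) :
    ∃ V : Submodule (ZMod 2) G, entropy z V.mkQ ≤ 18 * selfDistance z ∧
      log (Nat.card V) ≤ H[z] + 18 * selfDistance z := by
  obtain ⟨p, q, h⟩ := exists_isPFRMinimizer z
  have hp := h.isDist_left
  have hq := h.isDist_right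
  obtain ⟨y, hy⟩ : ∃ y, q y ≠ 0 := by
    by_contra! hzero
    simpa only [mass, hzero, Finset.sum_const_zero, zero_ne_one] using hq.mass_eq_one
  have hpq := h.entropy_conv_eq_left hz
  have hqp := h.entropy_conv_eq_right hz
  have hqV : entropy q (periods p).mkQ = 0 := entropy_eq_zero_of_forall_eq (a := (periods p).mkQ y)
    fun x hx => (Submodule.Quotient.eq _).2 (sub_mem_periods hp hq hpq hx hy)
  have hq_le := entropy_id_le (periods p) hq.nonneg
  have hp_eq := entropy_of_le_periods (le_refl (periods p))
  have hzp_eq := entropy_of_le_periods (periods_le_periods_conv p z)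
  have hzp_ge := mass_mul_entropy_le_conv hp.nonneg hz.nonneg (periods p).mkQ
  have hzq_ge := mass_mul_entropy_le_conv hz.nonneg hq.nonneg (AddMonoidHom.id G)
  have hzq_ge' := mass_mul_entropy_le_conv hq.nonneg hz.nonneg (AddMonoidHom.id G)
  have hmin := h.le_of_isDist hz hz
  have hpV := entropy_nonneg hp.nonneg (periods p).mkQ
  have hzV := entropy_nonneg hz.nonneg (periods p).mkQ
  rw [pfrFunctional_self_of_isDist hz] at hmin
  rw [conv_comm p] at hzp_ge
  rw [conv_comm q] at hzq_ge'
  refine ⟨periods p, ?_, ?_⟩ <;>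
  · simp only [pfrFunctional, selfDistance, pairEntropy, mass_conv, AddMonoidHom.coe_id,
      hz.mass_eq_one, hp.mass_eq_one, hq.mass_eq_one, one_mul, inv_one] at *
    linarith

/-- The entropic polynomial Freiman–Ruzsa theorem over `𝔽₂`, for a single variable. -/
theorem exists_submodule_entropy_le (hz : 0 ≤ z) :
    ∃ V : Submodule (ZMod 2) G, entropy z V.mkQ ≤ 18 * selfDistance z ∧
      mass z * log (Nat.card V) ≤ H[z] + 18 * selfDistance z := by
  obtain ⟨z', hz', hzz⟩ := exists_eq_smul_isDist hz
  obtain ⟨V, hV, hcard⟩ := hz'.exists_submodule_entropy_le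
  have hm := mass_nonneg hz
  have hself := selfDistance_smul hz'.nonneg hm
  have hent := entropy_smul hz'.nonneg hm id
  have hproj := entropy_smul hz'.nonneg hm V.mkQ
  rw [← hzz] at hself hent hproj
  refine ⟨V, ?_, ?_⟩
  · rw [hproj, hself, mul_left_comm]
    gcongr
  · rw [hent, hself, mul_left_comm 18, ← mul_add]
    gcongr

end PFR

/-! ### Consequences of statement `B` -/

section Distributions

theorem ent_eq_entropy {A : Type*} [Fintype A] {p : A → ℝ} (hp : IsDist p) : ent p = H[p] := by
  rw [ent, finsum_eq_sum_of_fintype, entropy_eq_sum_negMulLog, push_id, hp.mass_eq_one,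
    negMulLog_one, sub_zero]

theorem ent_push {Ω A : Type*} [Fintype Ω] [Finite A] {p : Ω → ℝ} (hp : IsDist p) (X : Ω → A) :
    ent (push X p) = entropy p X := by
  have := Fintype.ofFinite A
  rw [ent_eq_entropy (hp.push X), entropy_push_id]

variable {Ω A : Type*} [Fintype Ω] {p q : Ω → ℝ}

theorem pairEntropy_of_isDist (hp : IsDist p) (hq : IsDist q) (f : Ω → A) :
    pairEntropy f p q = entropy p f + entropy q f := by
  rw [pairEntropy, hp.mass_eq_one, hq.mass_eq_one, one_mul, one_mul]

theorem pairEntropy_push {B : Type*} [Fintype A] (X : Ω → A) (g : A → B) (p q : Ω → ℝ) :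
    pairEntropy g (push X p) (push X q) = pairEntropy (fun ω => g (X ω)) p q := by
  simp only [pairEntropy, mass_push, entropy_push]

theorem pairEntropy_mono (hp : 0 ≤ p) (hq : 0 ≤ q) {B : Type*} {f : Ω → A} {g : Ω → B}
    (h : g.FactorsThrough f) : pairEntropy g p q ≤ pairEntropy f p q :=
  add_le_add (mul_le_mul_of_nonneg_left (entropy_mono hp h) (mass_nonneg hq))
    (mul_le_mul_of_nonneg_left (entropy_mono hq h) (mass_nonneg hp))

theorem pairEntropy_smul_smul (hp : 0 ≤ p) (hq : 0 ≤ q) {c d : ℝ} (hc : 0 ≤ c) (hd : 0 ≤ d)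
    (f : Ω → A) : pairEntropy f (c • p) (d • q) = c * d * pairEntropy f p q := by
  simp only [pairEntropy, mass_smul, entropy_smul hp hc, entropy_smul hq hd]
  ring

variable {G : Type*} [AddCommGroup G] [Fintype G]

theorem doubling_smul_smul {p q : G → ℝ} (hp : 0 ≤ p) (hq : 0 ≤ q)
    {c d : ℝ} (hc : 0 ≤ c) (hd : 0 ≤ d) (f : G → A) :
    doubling f (c • p) (d • q) = c * d * doubling f p q := by
  rw [doubling, pairEntropy_smul_smul hp hq hc hd, conv_smul_smul,
    entropy_smul (conv_nonneg hp hq) (mul_nonneg hc hd), doubling]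
  ring

theorem doubling_id_push [AddCommGroup A] [Fintype A] {F : Type*} [FunLike F G A]
    [AddMonoidHomClass F G A] (f : F) (p q : G → ℝ) :
    doubling id (push f p) (push f q) = doubling f p q := by
  rw [doubling, doubling, pairEntropy_push, ← push_conv, entropy_push_id]
  rfl

end Distributions

section Quotients

variable {G H : Type*} [AddCommGroup G] [Module (ZMod 2) G]

theorem mkQ_factorsThrough_mkQ {V W : Submodule (ZMod 2) G} (h : V ≤ W) :
    Function.FactorsThrough W.mkQ V.mkQ := fun _ _ hxy =>
  (Submodule.Quotient.eq W).2 (h ((Submodule.Quotient.eq V).1 hxy))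

theorem log_card_nonneg (V : Submodule (ZMod 2) G) : 0 ≤ log (Nat.card V) := log_natCast_nonneg _

theorem log_card_bot : log (Nat.card (⊥ : Submodule (ZMod 2) G)) = 0 := by
  rw [Nat.card_unique, Nat.cast_one, log_one]

theorem log_card_comap_mkQ [Finite G] (V : Submodule (ZMod 2) G) (W : Submodule (ZMod 2) (G ⧸ V)) :
    log (Nat.card (W.comap V.mkQ)) = log (Nat.card V) + log (Nat.card W) := by
  have hcard : Nat.card (W.comap V.mkQ) = Nat.card V * Nat.card W := by
    rw [← Nat.card_prod]
    exact Nat.card_congr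
      (QuotientAddGroup.preimageMkEquivAddSubgroupProdSet V.toAddSubgroup (W : Set (G ⧸ V)))
  have : Finite (G ⧸ V) := Quotient.finite _
  rw [hcard, Nat.cast_mul, log_mul (Nat.cast_ne_zero.2 Nat.card_pos.ne')
    (Nat.cast_ne_zero.2 Nat.card_pos.ne')]

variable [Fintype G] [AddCommGroup H] [Module (ZMod 2) H] [Fintype H]

theorem entropy_mkQ_comap (f : G →ₗ[ZMod 2] H) (W : Submodule (ZMod 2) H) (p : G → ℝ) :
    entropy p (W.comap f).mkQ = entropy (push f p) W.mkQ := by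
  rw [entropy_push]
  exact entropy_congr fun x y => by
    simp only [Submodule.mkQ_apply, Submodule.Quotient.eq, Submodule.mem_comap, map_sub]

theorem pairEntropy_mkQ_comap (f : G →ₗ[ZMod 2] H) (W : Submodule (ZMod 2) H) (p q : G → ℝ) :
    pairEntropy (W.comap f).mkQ p q = pairEntropy W.mkQ (push f p) (push f q) := by
  simp only [pairEntropy, entropy_mkQ_comap, mass_push]

theorem doubling_mkQ_comap (f : G →ₗ[ZMod 2] H) (W : Submodule (ZMod 2) H) (p q : G → ℝ) :
    doubling (W.comap f).mkQ p q = doubling W.mkQ (push f p) (push f q) := by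
  rw [doubling, doubling, pairEntropy_mkQ_comap, entropy_mkQ_comap, push_conv]

theorem entropy_mkQ_bot (p : G → ℝ) : entropy p (⊥ : Submodule (ZMod 2) G).mkQ = H[p] :=
  entropy_congr fun x y => by
    rw [Submodule.mkQ_apply, Submodule.mkQ_apply, Submodule.Quotient.eq, Submodule.mem_bot,
      sub_eq_zero, id, id]

end Quotients

namespace StB

variable {G : Type*} [AddCommGroup G] [Module (ZMod 2) G] [Fintype G] {η ε L : ℝ} {p q : G → ℝ}

theorem exists_submodule (hB : StB η ε L) (hp : IsDist p) (hq : IsDist q) :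
    ∃ V : Submodule (ZMod 2) G, log (Nat.card V) ≤ L * pairEntropy id p q ∧
      doubling V.mkQ p q ≤ η * pairEntropy V.mkQ p q + ε * pairEntropy id p q := by
  let e := (Module.finBasis (ZMod 2) G).equivFun
  have he : ∀ r : G → ℝ, H[push e r] = H[r] := fun r => by
    rw [entropy_push_id]
    exact entropy_congr fun _ _ => e.injective.eq_iff
  have hp' := hp.push e
  have hq' := hq.push e
  obtain ⟨W, hcard, hW⟩ := hB _ _ _ hp' hq'
  have := Fintype.ofFinite (Fvec (Module.finrank (ZMod 2) G) ⧸ W)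
  rw [ent_eq_entropy (isDist_unifOn W), entropy_unifOn, ent_eq_entropy hp', ent_eq_entropy hq', he,
    he, ← pairEntropy_of_isDist hp hq] at hcard
  rw [← push_conv, ent_push (hp'.conv hq'), ent_push hp', ent_push hq', ent_eq_entropy hp',
    ent_eq_entropy hq', he, he, ← pairEntropy_of_isDist hp hq,
    ← pairEntropy_of_isDist hp' hq'] at hW
  refine ⟨W.comap e.toLinearMap, ?_, ?_⟩
  · rwa [Nat.card_congr (e.toEquiv.subtypeEquiv fun _ => Iff.rfl : W.comap e.toLinearMap ≃ W)]
  · rw [doubling_mkQ_comap, pairEntropy_mkQ_comap, doubling]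
    simp only [LinearEquiv.coe_coe]
    linarith

theorem exists_submodule_ge_of_isDist (hB : StB η ε L) (hp : IsDist p) (hq : IsDist q)
    (V : Submodule (ZMod 2) G) :
    ∃ W, V ≤ W ∧ log (Nat.card W) - log (Nat.card V) ≤ L * pairEntropy V.mkQ p q ∧
      doubling W.mkQ p q ≤ η * pairEntropy W.mkQ p q + ε * pairEntropy V.mkQ p q := by
  have := Fintype.ofFinite (G ⧸ V)
  obtain ⟨W, hcard, hW⟩ := hB.exists_submodule (hp.push V.mkQ) (hq.push V.mkQ)
  rw [← doubling_mkQ_comap, ← pairEntropy_mkQ_comap, pairEntropy_push] at hW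
  rw [pairEntropy_push] at hcard
  refine ⟨W.comap V.mkQ, V.le_comap_mkQ W, ?_, hW⟩
  rw [log_card_comap_mkQ, add_sub_cancel_left]
  exact hcard

theorem exists_submodule_ge (hB : StB η ε L) (hp : 0 ≤ p) (hq : 0 ≤ q) (V : Submodule (ZMod 2) G) :
    ∃ W, V ≤ W ∧
      mass p * mass q * (log (Nat.card W) - log (Nat.card V)) ≤ L * pairEntropy V.mkQ p q ∧
      doubling W.mkQ p q ≤ η * pairEntropy W.mkQ p q + ε * pairEntropy V.mkQ p q := by
  obtain ⟨p', hp', hpp'⟩ := exists_eq_smul_isDist hp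
  obtain ⟨q', hq', hqq'⟩ := exists_eq_smul_isDist hq
  obtain ⟨W, hVW, hcard, hW⟩ := hB.exists_submodule_ge_of_isDist hp' hq' V
  have hmass := mul_nonneg (mass_nonneg hp) (mass_nonneg hq)
  have hpair : ∀ U : Submodule (ZMod 2) G,
      pairEntropy U.mkQ p q = mass p * mass q * pairEntropy U.mkQ p' q' := fun U => by
    conv_lhs => rw [hpp', hqq', pairEntropy_smul_smul hp'.nonneg hq'.nonneg (mass_nonneg hp)
      (mass_nonneg hq)]
  have hdoubling : doubling W.mkQ p q = mass p * mass q * doubling W.mkQ p' q' := by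
    conv_lhs => rw [hpp', hqq', doubling_smul_smul hp'.nonneg hq'.nonneg (mass_nonneg hp)
      (mass_nonneg hq)]
  refine ⟨W, hVW, ?_, ?_⟩
  · rw [hpair]
    linarith [mul_le_mul_of_nonneg_left hcard hmass]
  · rw [hpair, hpair, hdoubling]
    linarith [mul_le_mul_of_nonneg_left hW hmass]

end StB

section EndgameFibers

variable {G A T : Type*} [AddCommGroup G] [Fintype G] [Fintype T]

theorem sum_doubling_id_le [AddCommGroup A] {F : Type*} [FunLike F G A] [AddMonoidHomClass F G A]
    {r : T → G → ℝ} (hr : ∀ t, 0 ≤ r t) {s : G → ℝ} (hs : 0 ≤ s) (f : F) :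
    ∑ t, doubling id (r t) s
      ≤ ∑ t, doubling f (r t) s + mass s * (H[∑ t, r t] - entropy (∑ t, r t) f) := by
  calc ∑ t, doubling id (r t) s
      ≤ ∑ t, (doubling f (r t) s + mass s * (H[r t] - entropy (r t) f)) :=
        Finset.sum_le_sum fun t _ => doubling_id_le_add (hr t) hs f
    _ = ∑ t, doubling f (r t) s + mass s * ∑ t, (H[r t] - entropy (r t) f) := by
        rw [Finset.sum_add_distrib, Finset.mul_sum]
    _ ≤ _ := by
        gcongr
        · exact mass_nonneg hs
        · exact sum_entropy_sub_le hr fun _ _ h => congrArg f h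

variable {p p' q q' : G → ℝ}

theorem mass_mul_sum_doubling_fiberWeight_le [AddCommGroup A] {F : Type*} [FunLike F G A]
    [AddMonoidHomClass F G A] (hp : IsDist p) (hp' : IsDist p') (hq : IsDist q) (hq' : IsDist q')
    (f : F) (t : G × G) :
    mass (fiberWeight p p' t.1) * ∑ u, doubling id (fiberWeight p p' u) (fiberWeight q q' t.2)
      ≤ mass (fiberSum p p' q q' t) * (H[p] - entropy p f) + entropy (fiberSum p p' q q' t) f := by
  have hX := fiberWeight_nonneg hp.nonneg hp'.nonneg
  have hY := fiberWeight_nonneg hq.nonneg hq'.nonneg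
  have hZ := fiberSum_nonneg hp.nonneg hp'.nonneg hq.nonneg hq'.nonneg t
  have hsum := sum_doubling_id_le hX hZ f
  have hle : ∑ u, doubling f (fiberWeight p p' u) (fiberSum p p' q q' t)
      ≤ entropy (fiberSum p p' q q' t) f := by
    calc _ ≤ ∑ u, mass (fiberWeight p p' u) * entropy (fiberSum p p' q q' t) f :=
          Finset.sum_le_sum fun u _ => (doubling_comm _ _ _).trans_le (doubling_le hZ (hX u) f)
      _ = _ := by
          rw [← Finset.sum_mul, sum_mass_fiberWeight, hp.mass_eq_one, hp'.mass_eq_one, one_mul,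
            one_mul]
  rw [sum_fiberWeight, hp'.mass_eq_one, one_smul] at hsum
  rw [Finset.mul_sum]
  calc _ ≤ ∑ u, doubling id (fiberWeight p p' u) (fiberSum p p' q q' t) :=
        Finset.sum_le_sum fun u _ => by
          rw [fiberSum, conv_comm]
          exact mass_mul_doubling_le (hX u) (hY t.2) (hX t.1)
    _ ≤ _ := by linarith

theorem sum_mass_mul_sum_doubling_fiberWeight (hp : IsDist p) (hp' : IsDist p') (hq : IsDist q)
    (hq' : IsDist q') :
    ∑ t : G × G, mass (fiberWeight p p' t.1)
        * ∑ u, doubling id (fiberWeight p p' u) (fiberWeight q q' t.2)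
      = H[p] + H[p'] + H[q] + H[q'] - pairSumsEntropy p p' q q' := by
  rw [← sum_doubling_fiberWeight hp hp' hq hq', Fintype.sum_prod_type, Fintype.sum_prod_type]
  simp only [← Finset.mul_sum]
  rw [← Finset.sum_mul, sum_mass_fiberWeight, hp.mass_eq_one, hp'.mass_eq_one, one_mul, one_mul,
    Finset.sum_comm]

-- A fibre whose share of the total doubling exceeds its share of the self-distances, of
-- `a * H[X + Y]` and of `b` has positive mass, and its approximating subspace works.
theorem exists_submodule_of_lt_sum_doubling [Module (ZMod 2) G] (hp : IsDist p) (hq : IsDist q)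
    {a b : ℝ} (ha : 0 ≤ a) (hb : 0 ≤ b)
    (hlt : 18 * (1 + a) * ∑ t, selfDistance (fiberSum p q q p t) + a * H[conv p q] + b
      < 2 * (H[p] + H[q]) - pairSumsEntropy p q q p) :
    ∃ V : Submodule (ZMod 2) G, a * log (Nat.card V) ≤ H[p] ∧ b < H[p] - entropy p V.mkQ := by
  set Z := fiberSum p q q p
  have hZ : ∀ t, 0 ≤ Z t := fiberSum_nonneg hp.nonneg hq.nonneg hq.nonneg hp.nonneg
  set g : G × G → ℝ := fun t => mass (fiberWeight p q t.1)
    * ∑ u, doubling id (fiberWeight p q u) (fiberWeight q p t.2)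
  have hg : ∑ t, g t = 2 * (H[p] + H[q]) - pairSumsEntropy p q q p := by
    rw [sum_mass_mul_sum_doubling_fiberWeight hp hq hq hp]
    ring
  have hHZ : ∑ t, H[Z t] ≤ H[conv p q] := by
    have := sum_entropy_le hZ id
    rwa [sum_fiberSum, hp.mass_eq_one, hq.mass_eq_one, one_mul, one_smul] at this
  obtain ⟨t, -, ht⟩ : ∃ t ∈ Finset.univ, 18 * selfDistance (Z t)
      + a * (H[Z t] + 18 * selfDistance (Z t)) + b * mass (Z t) < g t := by
    apply Finset.exists_lt_of_sum_lt
    simp only [Finset.sum_add_distrib, ← Finset.mul_sum]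
    rw [sum_mass_fiberSum hp hq hq hp, hg]
    linarith [mul_le_mul_of_nonneg_left hHZ ha]
  obtain ⟨V, hV, hcard⟩ := exists_submodule_entropy_le (hZ t)
  have hgt : g t ≤ mass (Z t) * (H[p] - entropy p V.mkQ) + 18 * selfDistance (Z t) := by
    linarith [mass_mul_sum_doubling_fiberWeight_le hp hq hq hp V.mkQ t]
  have hlog := mul_le_mul_of_nonneg_left hcard ha
  have hlog_nonneg := mul_nonneg ha (mul_nonneg (mass_nonneg (hZ t)) (log_card_nonneg V))
  have hmass : 0 < mass (Z t) := (mass_nonneg (hZ t)).lt_of_ne' fun h => by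
    simp only [h, zero_mul, mul_zero] at *
    linarith
  refine ⟨V, le_of_mul_le_mul_left ?_ hmass, lt_of_mul_lt_mul_left ?_ hmass.le⟩
  · have hV_nonneg := mul_nonneg hmass.le (entropy_nonneg hp.nonneg V.mkQ)
    have hb_nonneg := mul_nonneg hb hmass.le
    linarith
  · linarith

end EndgameFibers

namespace StB

variable {G T T' : Type*} [AddCommGroup G] [Module (ZMod 2) G] [Fintype G] [Fintype T] [Fintype T']
  {η δ L c : ℝ}

-- If the subspace `W ≥ V` provided by statement `B` lowered the doubling of `X`, `Y` substantially,
-- then it would compress `Y` at a cost contradicting the minimality of `V`.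
theorem doubling_mkQ_le (hB : StB η δ L) (hη : 0 ≤ η) (hc : 0 ≤ c) (hcL : c * L ≤ δ)
    {r s : G → ℝ} (hr : 0 ≤ r) (hs : 0 ≤ s) {V : Submodule (ZMod 2) G}
    (hV : ∀ W, V ≤ W → entropy s V.mkQ + c * mass s * log (Nat.card V)
      ≤ entropy s W.mkQ + c * mass s * log (Nat.card W)) :
    doubling V.mkQ r s ≤ (η + 2 * δ) * pairEntropy V.mkQ r s := by
  obtain ⟨W, hVW, hcard, hW⟩ := hB.exists_submodule_ge hr hs V
  have hfactors := mkQ_factorsThrough_mkQ hVW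
  have hmono := mul_le_mul_of_nonneg_left (pairEntropy_mono hr hs hfactors) hη
  have hgain : mass r * (entropy s V.mkQ - entropy s W.mkQ) ≤ δ * pairEntropy V.mkQ r s := by
    calc mass r * (entropy s V.mkQ - entropy s W.mkQ)
        ≤ mass r * (c * mass s * (log (Nat.card W) - log (Nat.card V))) :=
          mul_le_mul_of_nonneg_left (by linarith [hV W hVW]) (mass_nonneg hr)
      _ = c * (mass r * mass s * (log (Nat.card W) - log (Nat.card V))) := by ring
      _ ≤ c * (L * pairEntropy V.mkQ r s) := mul_le_mul_of_nonneg_left hcard hc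
      _ = c * L * pairEntropy V.mkQ r s := by ring
      _ ≤ δ * pairEntropy V.mkQ r s :=
          mul_le_mul_of_nonneg_right hcL (pairEntropy_nonneg hr hs _)
  have hproj := entropy_conv_add_le_of_factorsThrough hs hr V.mkQ W.mkQ hfactors
  rw [conv_comm] at hproj
  simp only [doubling, pairEntropy] at *
  linarith

theorem exists_submodule_doubling_le (hB : StB η δ L) (hη : 0 ≤ η) (hδ : 0 ≤ δ) (hc : 0 ≤ c)
    (hcL : c * L ≤ δ) {s : G → ℝ} (hs : 0 ≤ s) :
    ∃ V : Submodule (ZMod 2) G, c * mass s * log (Nat.card V) ≤ H[s] ∧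
      ∀ r : G → ℝ, 0 ≤ r → doubling V.mkQ r s ≤ (η + 2 * δ) * pairEntropy id r s := by
  obtain ⟨V, hV⟩ := Finite.exists_min fun V : Submodule (ZMod 2) G =>
    entropy s V.mkQ + c * mass s * log (Nat.card V)
  have hbot := hV ⊥
  rw [entropy_mkQ_bot, log_card_bot, mul_zero, add_zero] at hbot
  refine ⟨V, by linarith [entropy_nonneg hs V.mkQ], fun r hr => ?_⟩
  exact (hB.doubling_mkQ_le hη hc hcL hr hs fun W _ => hV W).trans <|
    mul_le_mul_of_nonneg_left (pairEntropy_mono hr hs fun _ _ h => congrArg _ h) (by positivity)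

theorem sum_doubling_le (hB : StB η δ L) (hη : 0 ≤ η) (hδ : 0 ≤ δ) (hc : 0 ≤ c) (hcL : c * L ≤ δ)
    {r : T → G → ℝ} (hr : ∀ t, 0 ≤ r t) (hdist : IsDist (∑ t, r t)) {s : G → ℝ} (hs : 0 ≤ s)
    {h : ℝ} (hh : H[∑ t, r t] ≤ h)
    (hgain : ∀ V : Submodule (ZMod 2) G, 3 * δ * (c * log (Nat.card V)) ≤ h →
      H[∑ t, r t] - entropy (∑ t, r t) V.mkQ ≤ δ * h) :
    ∑ t, doubling id (r t) s
      ≤ η * (mass s * ∑ t, H[r t] + H[s]) + 3 * δ * (mass s * h + H[s]) := by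
  have hsum : ∑ t, H[r t] ≤ h := (sum_entropy_le hr id).trans hh
  have hmass := mass_nonneg hs
  have hs_nonneg := entropy_nonneg hs id
  have hr_nonneg : 0 ≤ ∑ t, H[r t] := Finset.sum_nonneg fun t _ => entropy_nonneg (hr t) id
  have hh_nonneg := hr_nonneg.trans hsum
  have hmsum := mul_le_mul_of_nonneg_left hsum hmass
  rcases le_or_gt (mass s * h) (3 * δ * H[s]) with hlarge | hsmall
  · calc ∑ t, doubling id (r t) s ≤ mass s * ∑ t, H[r t] := by
          rw [Finset.mul_sum]
          exact Finset.sum_le_sum fun t _ => doubling_le (hr t) hs (AddMonoidHom.id G)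
      _ ≤ 3 * δ * H[s] := hmsum.trans hlarge
      _ ≤ 3 * δ * (mass s * h + H[s]) := by
          gcongr
          exact le_add_of_nonneg_left (by positivity)
      _ ≤ _ := le_add_of_nonneg_left (by positivity)
  obtain ⟨V, hcard, hV⟩ := hB.exists_submodule_doubling_le hη hδ hc hcL hs
  have hcard' : 3 * δ * (c * log (Nat.card V)) ≤ h := by
    have hpos : 0 < mass s := hmass.lt_of_ne' fun h0 => by
      rw [h0, zero_mul] at hsmall
      exact hsmall.not_ge (by positivity)
    refine le_of_mul_le_mul_left ?_ hpos
    linarith [mul_le_mul_of_nonneg_left hcard (by positivity : 0 ≤ 3 * δ)]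
  have hsumV : ∑ t, doubling V.mkQ (r t) s ≤ (η + 2 * δ) * (mass s * ∑ t, H[r t] + H[s]) := by
    rw [← one_mul H[s], ← hdist.mass_eq_one, ← sum_pairEntropy, Finset.mul_sum]
    exact Finset.sum_le_sum fun t _ => hV (r t) (hr t)
  have hgainV := mul_le_mul_of_nonneg_left (hgain V hcard') hmass
  linarith [sum_doubling_id_le hr hs V.mkQ, mul_le_mul_of_nonneg_left hmsum hδ,
    mul_nonneg hδ hs_nonneg]

theorem sum_sum_doubling_le (hB : StB η δ L) (hη : 0 ≤ η) (hδ : 0 ≤ δ) (hc : 0 ≤ c)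
    (hcL : c * L ≤ δ) {r : T → G → ℝ} (hr : ∀ t, 0 ≤ r t) (hdist : IsDist (∑ t, r t))
    {s : T' → G → ℝ} (hs : ∀ t, 0 ≤ s t) (hdist' : IsDist (∑ t, s t))
    {h : ℝ} (hrh : H[∑ t, r t] ≤ h) (hsh : H[∑ t, s t] ≤ h)
    (hgain : ∀ V : Submodule (ZMod 2) G, 3 * δ * (c * log (Nat.card V)) ≤ h →
      H[∑ t, r t] - entropy (∑ t, r t) V.mkQ ≤ δ * h) :
    ∑ t', ∑ t, doubling id (r t) (s t') ≤ η * (∑ t, H[r t] + ∑ t, H[s t]) + 6 * δ * h := by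
  calc ∑ t', ∑ t, doubling id (r t) (s t')
      ≤ ∑ t', (η * (mass (s t') * ∑ t, H[r t] + H[s t'])
          + 3 * δ * (mass (s t') * h + H[s t'])) :=
        Finset.sum_le_sum fun t' _ => hB.sum_doubling_le hη hδ hc hcL hr hdist (hs t') hrh hgain
    _ = η * (∑ t, H[r t] + ∑ t, H[s t]) + 3 * δ * (h + ∑ t, H[s t]) := by
        simp only [Finset.sum_add_distrib, ← Finset.mul_sum, ← Finset.sum_mul, sum_mass,
          hdist'.mass_eq_one, one_mul]
    _ ≤ _ := by
        linarith [mul_le_mul_of_nonneg_left ((sum_entropy_le hs id).trans hsh) hδ]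

variable {p p' q q' : G → ℝ}

theorem sum_doubling_fiberWeight_le (hB : StB η δ L) (hη : 0 ≤ η) (hδ : 0 ≤ δ) (hc : 0 ≤ c)
    (hcL : c * L ≤ δ) (hp : IsDist p) (hp' : IsDist p') (hq : IsDist q) (hq' : IsDist q')
    {h : ℝ} (hph : H[p] ≤ h) (hqh : H[q] ≤ h)
    (hgain : ∀ V : Submodule (ZMod 2) G, 3 * δ * (c * log (Nat.card V)) ≤ h →
      H[p] - entropy p V.mkQ ≤ δ * h) :
    ∑ t : G × G, doubling id (fiberWeight p p' t.1) (fiberWeight q q' t.2)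
      ≤ η * (H[p] + H[p'] - H[conv p p'] + (H[q] + H[q'] - H[conv q q'])) + 6 * δ * h := by
  have hsum : ∀ {p p' : G → ℝ}, IsDist p' → ∑ u, fiberWeight p p' u = p := fun h => by
    rw [sum_fiberWeight, h.mass_eq_one, one_smul]
  have hent : ∀ {p p' : G → ℝ}, IsDist p → IsDist p' →
      ∑ u, H[fiberWeight p p' u] = H[p] + H[p'] - H[conv p p'] := fun h h' => by
    rw [sum_entropy_fiberWeight h.nonneg h'.nonneg, doubling, pairEntropy_of_isDist h h']
  have hle := hB.sum_sum_doubling_le hη hδ hc hcL (fiberWeight_nonneg hp.nonneg hp'.nonneg)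
    ((hsum hp').symm ▸ hp) (fiberWeight_nonneg hq.nonneg hq'.nonneg) ((hsum hq').symm ▸ hq)
    (h := h) (by rwa [hsum hp']) (by rwa [hsum hq']) (by rwa [hsum hp'])
  rw [hent hp hp', hent hq hq'] at hle
  rwa [Fintype.sum_prod_type, Finset.sum_comm]

theorem sumInfo_le (hB : StB η δ L) (hη : 0 ≤ η) (hδ : 0 ≤ δ) (hc : 0 ≤ c)
    (hcL : c * L ≤ δ) (hp : IsDist p) (hp' : IsDist p') (hq : IsDist q) (hq' : IsDist q')
    {h : ℝ} (hph : H[p] ≤ h) (hqh : H[q] ≤ h) (hh : H[p] + H[p'] + (H[q] + H[q']) ≤ 2 * h)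
    (hgain : ∀ V : Submodule (ZMod 2) G, 3 * δ * (c * log (Nat.card V)) ≤ h →
      H[p] - entropy p V.mkQ ≤ δ * h)
    (hpq : (η - 2 * δ) * h ≤ doubling id p q) (hpq' : (η - 2 * δ) * h ≤ doubling id p' q')
    (hsums : doubling id (conv p p') (conv q q')
      ≤ η * (H[conv p p'] + H[conv q q']) + 4 * δ * h) :
    sumInfo p p' q q' ≤ 14 * δ * h := by
  linarith [doubling_add_doubling_add_sumInfo hp hp' hq hq', mul_le_mul_of_nonneg_left hh hη,
    hB.sum_doubling_fiberWeight_le hη hδ hc hcL hp hp' hq hq' hph hqh hgain]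

end StB

/-! ### The inductive step -/

section Endgame

variable {G : Type*} [AddCommGroup G] [Fintype G] {η δ L c h : ℝ} {p q : G → ℝ}

theorem le_sub_pairSumsEntropy (hη : 0 ≤ η) (hη' : η ≤ 1 / 2) (hδ : 0 ≤ δ) (hp : IsDist p)
    (hq : IsDist q) (hh : H[p] + H[q] ≤ h) (hpq : (η - 2 * δ) * h ≤ doubling id p q)
    (hsums : doubling id (conv p q) (conv q p) ≤ η * (H[conv p q] + H[conv q p]) + 4 * δ * h) :
    (2 * η ^ 2 - 10 * δ) * h ≤ 2 * (H[p] + H[q]) - pairSumsEntropy p q q p := by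
  have hinfo := sumInfo_nonneg hp hq hq hp
  have hdoubling : doubling id p q = H[p] + H[q] - H[conv p q] := by
    rw [doubling, pairEntropy_of_isDist hp hq]
  have hconv : H[conv p q] ≤ (1 - η + 2 * δ) * h := by linarith
  have hδh : 0 ≤ δ * h := mul_nonneg hδ <|
    (add_nonneg (entropy_nonneg hp.nonneg id) (entropy_nonneg hq.nonneg id)).trans hh
  have hfib := doubling_add_doubling_add_sumInfo hp hq hq hp
  rw [sum_doubling_fiberWeight hp hq hq hp, doubling_comm id q p] at hfib
  rw [conv_comm q p] at *
  linarith [mul_le_mul_of_nonneg_left hconv hη, mul_le_mul_of_nonneg_right hη' hδh]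

variable [Module (ZMod 2) G]

theorem exists_submodule_of_sumInfo_le (hη : 0 ≤ η) (hη' : η ≤ 1 / 2) (hδ : 0 < δ)
    (hδη : 2 ^ 10 * δ ≤ η ^ 2) (hp : IsDist p) (hq : IsDist q) (hpos : 0 < h)
    (hconv : H[conv p q] ≤ h)
    (hsame : sumInfo p p q q ≤ 14 * δ * h) (hcross : sumInfo p q q p ≤ 14 * δ * h)
    (hpairs : (2 * η ^ 2 - 10 * δ) * h ≤ 2 * (H[p] + H[q]) - pairSumsEntropy p q q p) :
    ∃ V : Submodule (ZMod 2) G,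
      η ^ 2 / 2 * log (Nat.card V) ≤ H[p] ∧ δ * h < H[p] - entropy p V.mkQ := by
  have hδh := mul_pos hδ hpos
  have hηsq : η ^ 2 / 2 ≤ 1 / 8 := by linarith [pow_le_pow_left₀ hη hη' 2]
  have hself : ∑ t, selfDistance (fiberSum p q q p t) ≤ 42 * (δ * h) := by
    linarith [sum_selfDistance_fiberSum_le hp hq]
  apply exists_submodule_of_lt_sum_doubling hp hq (by positivity) hδh.le
  calc 18 * (1 + η ^ 2 / 2) * ∑ t, selfDistance (fiberSum p q q p t)
        + η ^ 2 / 2 * H[conv p q] + δ * h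
      ≤ 18 * (1 + η ^ 2 / 2) * (42 * (δ * h)) + η ^ 2 / 2 * h + δ * h := by gcongr
    _ ≤ 18 * (1 + 1 / 8) * (42 * (δ * h)) + η ^ 2 / 2 * h + δ * h := by gcongr
    _ < (2 * η ^ 2 - 10 * δ) * h := by linarith [mul_le_mul_of_nonneg_right hδη hpos.le]
    _ ≤ _ := hpairs

namespace StB

-- If no subspace compressed `X` by `δ * h`, then statement `B` would force all the doubling of the
-- sums and of the fibres to be nearly extremal, and the fibring identity would make both
-- conditional mutual informations `O(δ h)`; but then some fibre of the sums yields a subspace.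
theorem exists_submodule_of_le_doubling (hB : StB η δ L) (hη : 0 ≤ η) (hη' : η ≤ 1 / 2)
    (hδ : 0 < δ) (hδη : 2 ^ 10 * δ ≤ η ^ 2) (hc : 0 ≤ c) (hc' : c ≤ 1) (hcL : c * L ≤ δ)
    (hp : IsDist p) (hq : IsDist q) (hh : H[p] + H[q] ≤ h)
    (hpq : (η - 2 * δ) * h ≤ doubling id p q)
    (hsame : doubling id (conv p p) (conv q q)
      ≤ η * (H[conv p p] + H[conv q q]) + 4 * δ * h)
    (hcross : doubling id (conv p q) (conv q p)
      ≤ η * (H[conv p q] + H[conv q p]) + 4 * δ * h) :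
    ∃ V : Submodule (ZMod 2) G, 3 * δ * (c * log (Nat.card V)) ≤ h ∧
      δ * h ≤ H[p] - entropy p V.mkQ := by
  by_contra! hgain
  have hgain' : ∀ V : Submodule (ZMod 2) G, 3 * δ * (c * log (Nat.card V)) ≤ h →
      H[p] - entropy p V.mkQ ≤ δ * h := fun V hV => (hgain V hV).le
  have hph : H[p] ≤ h := by linarith [entropy_nonneg hq.nonneg id]
  have hqh : H[q] ≤ h := by linarith [entropy_nonneg hp.nonneg id]
  have hpos : 0 < h := by
    have hbot := hgain ⊥
    rw [log_card_bot, entropy_mkQ_bot, sub_self, mul_zero, mul_zero] at hbot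
    exact pos_of_mul_pos_right (hbot ((entropy_nonneg hp.nonneg id).trans hph)) hδ.le
  have hconv : H[conv p q] ≤ h := by
    refine (entropy_conv_le hp.nonneg hq.nonneg (AddMonoidHom.id G)).trans ?_
    rwa [pairEntropy_of_isDist hp hq]
  have hqp := doubling_comm id p q ▸ hpq
  obtain ⟨V, hcard, hV⟩ := exists_submodule_of_sumInfo_le hη hη' hδ hδη hp hq hpos hconv
    (hB.sumInfo_le hη hδ.le hc hcL hp hp hq hq hph hqh (by linarith) hgain' hpq hpq hsame)
    (hB.sumInfo_le hη hδ.le hc hcL hp hq hq hp hph hqh (by linarith) hgain' hpq hqp hcross)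
    (le_sub_pairSumsEntropy hη hη' hδ.le hp hq hh hpq hcross)
  refine (hgain V ?_).not_gt hV
  calc 3 * δ * (c * log (Nat.card V)) ≤ η ^ 2 / 2 * log (Nat.card V) := by
        rw [← mul_assoc]
        gcongr
        linarith [mul_le_mul_of_nonneg_left hc' hδ.le]
    _ ≤ h := hcard.trans hph

theorem exists_submodule_of_le_doubling_mkQ (hB : StB η δ L) (hη : 0 ≤ η) (hη' : η ≤ 1 / 2)
    (hδ : 0 < δ) (hδη : 2 ^ 10 * δ ≤ η ^ 2) (hc : 0 ≤ c) (hc' : c ≤ 1) (hcL : c * L ≤ δ)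
    (hp : IsDist p) (hq : IsDist q) (hh : H[p] + H[q] ≤ h) {V : Submodule (ZMod 2) G}
    (hpq : (η - 2 * δ) * h ≤ doubling V.mkQ p q)
    (hsame : doubling V.mkQ (conv p p) (conv q q)
      ≤ η * pairEntropy V.mkQ (conv p p) (conv q q) + 4 * δ * h)
    (hcross : doubling V.mkQ (conv p q) (conv q p)
      ≤ η * pairEntropy V.mkQ (conv p q) (conv q p) + 4 * δ * h) :
    ∃ W : Submodule (ZMod 2) G, 3 * δ * (c * (log (Nat.card W) - log (Nat.card V))) ≤ h ∧
      δ * h ≤ entropy p V.mkQ - entropy p W.mkQ := by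
  have := Fintype.ofFinite (G ⧸ V)
  have hsums : ∀ {r s : G → ℝ}, IsDist r → IsDist s →
      doubling V.mkQ r s ≤ η * pairEntropy V.mkQ r s + 4 * δ * h →
      doubling id (push V.mkQ r) (push V.mkQ s)
        ≤ η * (H[push V.mkQ r] + H[push V.mkQ s]) + 4 * δ * h := fun hr hs hle => by
    rwa [doubling_id_push, entropy_push_id, entropy_push_id, ← pairEntropy_of_isDist hr hs]
  have hsame' := hsums (hp.conv hp) (hq.conv hq) hsame
  have hcross' := hsums (hp.conv hq) (hq.conv hp) hcross
  simp only [push_conv] at hsame' hcross'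
  obtain ⟨W, hcard, hW⟩ := hB.exists_submodule_of_le_doubling hη hη' hδ hδη hc hc' hcL
    (hp.push V.mkQ) (hq.push V.mkQ)
    (by
      rw [entropy_push_id, entropy_push_id]
      linarith [entropy_le_entropy_id hp.nonneg V.mkQ, entropy_le_entropy_id hq.nonneg V.mkQ])
    (by rwa [doubling_id_push]) hsame' hcross'
  refine ⟨W.comap V.mkQ, ?_, ?_⟩
  · rwa [log_card_comap_mkQ, add_sub_cancel_left]
  · rwa [entropy_mkQ_comap, ← entropy_push_id V.mkQ]

theorem doubling_mkQ_le_of_isDist (hB : StB η δ L) (hη : 0 ≤ η) (hδ : 0 ≤ δ) (hc : 0 ≤ c)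
    (hcL : c * L ≤ δ) (hp : IsDist p) (hq : IsDist q) {V : Submodule (ZMod 2) G}
    (hV : ∀ W, V ≤ W → entropy p V.mkQ + c * log (Nat.card V)
      ≤ entropy p W.mkQ + c * log (Nat.card W)) :
    doubling V.mkQ p q ≤ η * pairEntropy V.mkQ p q + 2 * δ * (H[p] + H[q]) := by
  have hle := hB.doubling_mkQ_le hη hc hcL hq.nonneg hp.nonneg (V := V)
    (by simpa only [hp.mass_eq_one, mul_one] using hV)
  rw [doubling_comm, pairEntropy_comm, add_mul] at hle
  refine hle.trans (add_le_add_right (mul_le_mul_of_nonneg_left ?_ (by positivity)) _)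
  rw [pairEntropy_of_isDist hp hq]
  exact add_le_add (entropy_le_entropy_id hp.nonneg _) (entropy_le_entropy_id hq.nonneg _)

theorem exists_submodule_doubling_conv_le (hB : StB η δ L) (hη : 0 ≤ η) (hδ : 0 ≤ δ)
    (hc : 0 ≤ c) (hcL : c * L ≤ δ) (hp : IsDist p) (hq : IsDist q) (hh : H[p] + H[q] ≤ h) :
    ∃ V : Submodule (ZMod 2) G, c * log (Nat.card V) ≤ 3 * h ∧
      doubling V.mkQ (conv p p) (conv q q)
        ≤ η * pairEntropy V.mkQ (conv p p) (conv q q) + 4 * δ * h ∧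
      doubling V.mkQ (conv p q) (conv q p)
        ≤ η * pairEntropy V.mkQ (conv p q) (conv q p) + 4 * δ * h := by
  have hconv : ∀ {r s : G → ℝ}, IsDist r → IsDist s → H[conv r s] ≤ H[r] + H[s] := fun hr hs =>
    (entropy_conv_le hr.nonneg hs.nonneg (AddMonoidHom.id G)).trans_eq
      (pairEntropy_of_isDist hr hs _)
  have hpp := hp.conv hp
  have hpq := hp.conv hq
  have hpp_le := hconv hp hp
  have hqq_le := hconv hq hq
  have hpq_le := hconv hp hq
  obtain ⟨V, hV⟩ := Finite.exists_min fun V : Submodule (ZMod 2) G =>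
    entropy (conv p p) V.mkQ + entropy (conv p q) V.mkQ + c * log (Nat.card V)
  have hmono : ∀ {r : G → ℝ} {W : Submodule (ZMod 2) G}, IsDist r → V ≤ W →
      entropy r W.mkQ ≤ entropy r V.mkQ := fun hr hVW =>
    entropy_mono hr.nonneg (mkQ_factorsThrough_mkQ hVW)
  refine ⟨V, ?_, ?_, ?_⟩
  · have hbot := hV ⊥
    rw [entropy_mkQ_bot, entropy_mkQ_bot, log_card_bot] at hbot
    linarith [entropy_nonneg hpp.nonneg V.mkQ, entropy_nonneg hpq.nonneg V.mkQ,
      entropy_nonneg hq.nonneg id]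
  · refine (hB.doubling_mkQ_le_of_isDist hη hδ hc hcL hpp (hq.conv hq) fun W hVW => ?_).trans ?_
    · linarith [hV W, hmono hpq hVW]
    · linarith [mul_le_mul_of_nonneg_left (add_le_add hpp_le hqq_le) hδ,
        mul_le_mul_of_nonneg_left hh hδ]
  · refine (hB.doubling_mkQ_le_of_isDist hη hδ hc hcL hpq (hq.conv hp) fun W hVW => ?_).trans ?_
    · linarith [hV W, hmono hpp hVW]
    · rw [conv_comm q p]
      linarith [mul_le_mul_of_nonneg_left hpq_le hδ, mul_le_mul_of_nonneg_left hh hδ]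

theorem exists_submodule_entropy_sub_ge (hB : StB η δ L) (hη : 0 ≤ η) (hη' : η ≤ 1 / 2)
    (hδ : 0 < δ) (hδη : 2 ^ 10 * δ ≤ η ^ 2) (hc : 0 ≤ c) (hc' : c ≤ 1) (hcL : c * L ≤ δ)
    (hp : IsDist p) (hq : IsDist q) (hpq : (η - δ) * (H[p] + H[q]) ≤ doubling id p q) :
    ∃ V : Submodule (ZMod 2) G, δ * (c * log (Nat.card V)) ≤ 4 * (H[p] + H[q]) ∧
      δ * (H[p] + H[q]) ≤ H[p] - entropy p V.mkQ := by
  have hh := add_nonneg (entropy_nonneg hp.nonneg id) (entropy_nonneg hq.nonneg id)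
  have hδ' : δ ≤ 1 := by linarith [pow_le_pow_left₀ hη hη' 2]
  obtain ⟨V, hcard, hsame, hcross⟩ := hB.exists_submodule_doubling_conv_le hη hδ.le hc hcL hp hq
    le_rfl
  have hcardδ : δ * (c * log (Nat.card V)) ≤ 3 * (H[p] + H[q]) :=
    (mul_le_of_le_one_left (mul_nonneg hc (log_card_nonneg V)) hδ').trans hcard
  rcases le_or_gt (δ * (H[p] + H[q])) (H[p] - entropy p V.mkQ) with hgain | hgain
  · exact ⟨V, by linarith, hgain⟩
  have hV := doubling_id_le_add hp.nonneg hq.nonneg V.mkQ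
  rw [hq.mass_eq_one, one_mul] at hV
  obtain ⟨W, hcardW, hW⟩ := hB.exists_submodule_of_le_doubling_mkQ hη hη' hδ hδη hc hc' hcL hp hq
    le_rfl (by linarith) hsame hcross
  exact ⟨W, by linarith, by linarith [entropy_le_entropy_id hp.nonneg V.mkQ]⟩

end StB

end Endgame

theorem StA.mono {η L L' c : ℝ} (h : StA η L c) (hL : L ≤ L') : StA η L' c := by
  intro n p q hp hq hpq
  obtain ⟨V, hcard, hV⟩ := h n p q hp hq hpq
  refine ⟨V, hcard.trans (mul_le_mul_of_nonneg_right hL ?_), hV⟩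
  rw [ent_eq_entropy hp, ent_eq_entropy hq]
  exact add_nonneg (entropy_nonneg hp.nonneg id) (entropy_nonneg hq.nonneg id)

theorem statement18_general {η δ L : ℝ} (hη : 0 ≤ η) (hη' : η ≤ 1 / 2) (hδ : 0 < δ)
    (hδη : 2 ^ 10 * δ ≤ η ^ 2) (hB : StB η δ L) : StA (η - δ) (4 * max L 1 / δ ^ 2) δ := by
  intro n p q hp hq hpq
  set M := max L 1
  have hM : 0 < M := one_pos.trans_le (le_max_right _ _)
  have hδ' : δ ≤ 1 := by linarith [pow_le_pow_left₀ hη hη' 2]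
  have hc : δ / M ≤ 1 := (div_le_one hM).2 (hδ'.trans (le_max_right _ _))
  have hcL : δ / M * L ≤ δ := by
    rw [div_mul_eq_mul_div, div_le_iff₀ hM]
    exact mul_le_mul_of_nonneg_left (le_max_left _ _) hδ.le
  rw [ent_eq_entropy (hp.conv hq), ent_eq_entropy hp, ent_eq_entropy hq] at hpq
  have hdoubling : (η - δ) * (H[p] + H[q]) ≤ doubling id p q := by
    rw [doubling, pairEntropy_of_isDist hp hq]
    linarith
  obtain ⟨V, hcard, hV⟩ := hB.exists_submodule_entropy_sub_ge hη hη' hδ hδη (by positivity) hc hcL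
    hp hq hdoubling
  refine ⟨V, ?_, ?_⟩
  · rw [ent_eq_entropy (isDist_unifOn V), entropy_unifOn, ent_eq_entropy hp, ent_eq_entropy hq,
      div_mul_eq_mul_div, le_div_iff₀ (by positivity)]
    calc log (Nat.card V) * δ ^ 2 = M * (δ * (δ / M * log (Nat.card V))) := by field_simp
      _ ≤ M * (4 * (H[p] + H[q])) := mul_le_mul_of_nonneg_left hcard hM.le
      _ = 4 * M * (H[p] + H[q]) := by ring
  · rw [ent_push hp, ent_push hq, ent_eq_entropy hp, ent_eq_entropy hq]
    linarith [entropy_le_entropy_id hq.nonneg V.mkQ]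

/-- **Inductive step.** With `C = 2¹⁵`, for `η₀ ∈ (0, 1/2]` and `L₀ ≥ 0`,
`B(η₀, C⁻¹η₀², L₀)` implies `A(η₀ − C⁻¹η₀², C³η₀⁻⁴ max{L₀, 1}, C⁻¹η₀²)`. -/
theorem statement18 (η₀ L₀ : ℝ) (hη : η₀ ∈ Set.Ioc (0 : ℝ) (1 / 2)) (hL : 0 ≤ L₀)
    (hB : StB η₀ (((2 : ℝ) ^ 15)⁻¹ * η₀ ^ 2) L₀) :
    StA (η₀ - ((2 : ℝ) ^ 15)⁻¹ * η₀ ^ 2)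
      (((2 : ℝ) ^ 15) ^ 3 * (η₀ ^ 4)⁻¹ * max L₀ 1)
      (((2 : ℝ) ^ 15)⁻¹ * η₀ ^ 2) := by
  obtain ⟨hη_pos, hη_le⟩ := hη
  refine (statement18_general hη_pos.le hη_le (by positivity) ?_ hB).mono ?_
  · linarith [sq_nonneg η₀]
  · calc 4 * max L₀ 1 / (((2 : ℝ) ^ 15)⁻¹ * η₀ ^ 2) ^ 2
        = 4 * (2 ^ 15) ^ 2 * (η₀ ^ 4)⁻¹ * max L₀ 1 := by field_simp
      _ ≤ (2 ^ 15) ^ 3 * (η₀ ^ 4)⁻¹ * max L₀ 1 := by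
        gcongr
        norm_num
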